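/- Let N be a positive even integer and h ∈ (1/N)ℤ. Then for all τ ∈ H, τ^{-1/2} · ϑ̃_{N,h}(−1/τ) = (e(1/8)/N) · ∑_{j=0}^{N²−1} e(h·j/N) · ϑ̃_{N, j/N}(τ), where τ^{-1/2} is the principal branch and j/N runs over a set of representatives of the cosets (1/N)ℤ / Nℤ. -/

import Mathlib

open Complex MeasureTheory
open scoped Classical

noncomputable section

/-- `e(a) = exp(2πia)`. -/
def e (a : ℂ) : ℂ := Complex.exp (2 * (Real.pi : ℂ) * Complex.I * a)

/-- The Fourier transform `F(g)(x) = ∫ g(w) e(wx) dw`. -/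
def fourierT (g : ℝ → ℂ) (x : ℝ) : ℂ := ∫ w : ℝ, g w * e ((w * x : ℝ))

/-- The operator `E_σ(f)(x) = e(x²σ/2) ∫_0^x e(-w²σ/2) f(w) dw`. -/
def Eop (σ : ℂ) (f : ℝ → ℂ) (x : ℝ) : ℂ :=
  e ((x : ℂ)^2 * σ / 2) * ∫ w in (0:ℝ)..x, e (-(w : ℂ)^2 * σ / 2) * f w

/-- `ω_τ(x) = e(-x²τ/2) ∑_{m ∈ ℤ+1/2, m ≥ |x|} e(m²τ/2 + m/2)`. -/
def omega (τ : ℂ) (x : ℝ) : ℂ :=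
  e (-(x : ℂ)^2 * τ / 2) *
    ∑' m : ℤ, if |x| ≤ (m : ℝ) + 1/2 then
      e (((m : ℂ) + 1/2)^2 / 2 * τ + ((m : ℂ) + 1/2) / 2) else 0

/-- `η³(τ) = -i ∑_{m ∈ ℤ+1/2} m e(m²τ/2 + m/2)`. -/
def eta3 (τ : ℂ) : ℂ :=
  -Complex.I * ∑' m : ℤ, ((m : ℂ) + 1/2) * e (((m : ℂ) + 1/2)^2 / 2 * τ + ((m : ℂ) + 1/2) / 2)

/-- The complementary error function. -/
def erfc (x : ℝ) : ℝ := (2 / Real.sqrt Real.pi) * ∫ t in Set.Ioi x, Real.exp (-t^2)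

/-- `g⁺_τ`. -/
def gplus (τ : ℂ) (x : ℝ) : ℂ :=
  e (-(x : ℂ)^2 * τ / 2) * ((Real.sign x : ℂ) / (Complex.I * eta3 τ)) *
    ∑' m : ℤ, if |x| < (m : ℝ) + 1/2 then
      (((m : ℝ) + 1/2 - |x| : ℝ) : ℂ) * e (((m : ℂ) + 1/2)^2 / 2 * τ + ((m : ℂ) + 1/2) / 2)
    else 0

/-- `g*_τ`. -/
def gstar (τ : ℂ) (x : ℝ) : ℂ :=
  e (-(x : ℂ)^2 * τ / 2) * ((Real.sign x : ℂ) / 2) *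
    (erfc (Real.sqrt (2 * Real.pi * τ.im) * |x|) : ℂ)

/-- `g_τ = g⁺_τ - g*_τ`. -/
def gfun (τ : ℂ) (x : ℝ) : ℂ := gplus τ x - gstar τ x

/-- The operator `ξ_k f = 2i v^k conj(∂f/∂τ̄)`, with `∂/∂τ̄ = (1/2)(∂/∂u + i ∂/∂v)`. -/
def xi (k : ℝ) (f : ℂ → ℂ) (τ : ℂ) : ℂ :=
  2 * Complex.I * ((τ.im ^ k : ℝ) : ℂ) *
    (starRingEnd ℂ) ((1/2 : ℂ) * (fderiv ℝ f τ 1 + Complex.I * fderiv ℝ f τ Complex.I))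

/-- Sum of divisors function `σ₁`. -/
def sigma1 (n : ℕ) : ℕ := ∑ d ∈ Nat.divisors n, d

/-- The weight 2 Eisenstein series `E₂`. -/
def E2 (τ : ℂ) : ℂ := 1 - 24 * ∑' n : ℕ, (sigma1 (n+1) : ℂ) * e ((n + 1 : ℂ) * τ)

/-- `ϑ̃_{N,h}`. -/
def tvtheta (N : ℕ) (h : ℝ) (τ : ℂ) : ℂ :=
  (if ∃ m : ℤ, h = (m : ℝ) + 1/2 then
      e ((h : ℂ) / 2) * E2 τ / (12 * (N : ℂ) * Complex.I * eta3 τ) else 0)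
  + ∑' n : ℤ, gfun τ ((N : ℝ) * n + h)

/-- The Schwartz function `φ_τ(x,y) = √(2v)·x·e(x²τ/2 - y²τ̄/2)`. -/
def Phi (τ : ℂ) (x y : ℝ) : ℂ :=
  (Real.sqrt (2 * τ.im) : ℂ) * (x : ℂ) *
    e ((x : ℂ)^2 * τ / 2 - (y : ℂ)^2 * (starRingEnd ℂ) τ / 2)

/-- The signature (1,1) bilinear form `B((a₁,a₂),(b₁,b₂)) = a₁b₂ + a₂b₁`. -/
def Bform (a b : ℝ × ℝ) : ℝ := a.1 * b.2 + a.2 * b.1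

/-- `Z⁺_t = (t/√2, t⁻¹/√2)`. -/
def Zp (t : ℝ) : ℝ × ℝ := (t / Real.sqrt 2, t⁻¹ / Real.sqrt 2)

/-- `Z⁻_t = (t/√2, -t⁻¹/√2)`. -/
def Zm (t : ℝ) : ℝ × ℝ := (t / Real.sqrt 2, -t⁻¹ / Real.sqrt 2)

end

/-!
In light-cone coordinates `a = M + X`, `b = M - X`, the product `2iη³(τ) · ∑ g_τ(X)` is a sum over
`M ∈ ℤ + 1/2` and `X ∈ Nℤ + h` of the indefinite terms `e(abτ/2 + M/2)`, weighted by the difference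
of two smoothings of `|a|`: the one in the unboosted frame and the limit `c → ∞` of those in the
frames `(c a, b / c)`. The derivative of such a smoothing in `c` is a polynomial times a Gaussian,
so the lattice sum differs from its value `0` at `c = 1` by the integral of a convergent Gaussian
theta series, and Poisson summation shows that this series transforms with weight 2. Both sides of
the transformation law thus agree for all `c`, and hence in the limit `c → ∞`.

The limit picks up a boundary term from the lattice points on the isotropic line `a = 0`, which
exist only for `h ∈ ℤ + 1/2`. It is a multiple of `e(h/2) / v`, so the `E₂` summand of `ϑ̃_{N,h}`
together with it is a multiple of `e(h/2) E₂*`, where `E₂* = E₂ - 3/(πv)` has weight 2 and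
`h ↦ e(h/2)` on `ℤ + 1/2` is an eigenvector of the finite Fourier transform. Dividing by `η³`,
which has weight `3/2` and no zeros on the upper half plane, leaves weight `1/2`.
-/

open Filter
open scoped Real Topology

/-! ### The odd theta series `η³` and the Eisenstein series `E₂*` -/

lemma e_add (a b : ℂ) : e (a + b) = e a * e b := by
  simp only [e, ← Complex.exp_add, mul_add]

lemma e_ne_zero (a : ℂ) : e a ≠ 0 := Complex.exp_ne_zero _

lemma e_intCast (n : ℤ) : e n = 1 := by
  rw [e, mul_comm, Complex.exp_int_mul_two_pi_mul_I]

lemma e_one_half : e (1 / 2) = -1 := by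
  rw [e, show 2 * (π : ℂ) * I * (1 / 2) = π * I by ring, Complex.exp_pi_mul_I]

lemma norm_e (a : ℂ) : ‖e a‖ = Real.exp (-2 * π * a.im) := by
  simp [e, Complex.norm_exp]

lemma ne_zero_of_im_pos {τ : ℂ} (hτ : 0 < τ.im) : τ ≠ 0 := by
  rintro rfl
  simp at hτ

lemma im_neg_one_div (τ : ℂ) : (-1 / τ).im = τ.im / normSq τ := by
  rw [neg_div, one_div, Complex.neg_im, Complex.inv_im, neg_div, neg_neg]

lemma im_neg_one_div_pos {τ : ℂ} (hτ : 0 < τ.im) : 0 < (-1 / τ).im := by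
  rw [im_neg_one_div]
  exact div_pos hτ (normSq_pos.mpr (ne_zero_of_im_pos hτ))

/-- The term `e(M²τ/2 + M/2)`, `M = m + 1/2`, of the theta series whose derivative is `η³`. -/
noncomputable def thetaCoeff (τ : ℂ) (m : ℤ) : ℂ :=
  e (((m : ℂ) + 1/2)^2 / 2 * τ + ((m : ℂ) + 1/2) / 2)

lemma thetaCoeff_eq_jacobiTheta₂_term (τ : ℂ) (m : ℤ) :
    thetaCoeff τ m = e (τ / 8 + 1 / 4) * jacobiTheta₂_term m (τ / 2 + 1 / 2) τ := by
  simp only [thetaCoeff, e, jacobiTheta₂_term, ← Complex.exp_add]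
  ring_nf

lemma thetaCoeff_neg_one_sub (τ : ℂ) (m : ℤ) : thetaCoeff τ (-1 - m) = -thetaCoeff τ m := by
  have harg : (((-1 - m : ℤ) : ℂ) + 1/2)^2 / 2 * τ + (((-1 - m : ℤ) : ℂ) + 1/2) / 2
      = (((m : ℂ) + 1/2)^2 / 2 * τ + ((m : ℂ) + 1/2) / 2) + (1 / 2 + ((-m - 1 : ℤ) : ℂ)) := by
    push_cast
    ring
  rw [thetaCoeff, harg, e_add, e_add (1 / 2), e_intCast, e_one_half, thetaCoeff]
  ring

lemma norm_thetaCoeff (τ : ℂ) (m : ℤ) :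
    ‖thetaCoeff τ m‖ = Real.exp (-π * τ.im * ((m : ℝ) + 1/2)^2) := by
  have harg : ((m : ℂ) + 1/2)^2 / 2 * τ + ((m : ℂ) + 1/2) / 2
      = (((m : ℝ) + 1/2)^2 / 2 : ℝ) * τ + (((m : ℝ) + 1/2) / 2 : ℝ) := by
    push_cast
    ring
  rw [thetaCoeff, norm_e, harg, add_im, im_ofReal_mul, ofReal_im]
  ring_nf

lemma summable_thetaCoeff {τ : ℂ} (hτ : 0 < τ.im) : Summable (thetaCoeff τ) := by
  have hsum := (hasSum_jacobiTheta₂_term (τ / 2 + 1 / 2) hτ).summable.mul_left (e (τ / 8 + 1 / 4))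
  simpa only [← thetaCoeff_eq_jacobiTheta₂_term] using hsum

/-- The reflection `m ↦ -1 - m` changes the sign of every term. -/
lemma tsum_thetaCoeff (τ : ℂ) : ∑' m : ℤ, thetaCoeff τ m = 0 := by
  have hreflect := (Equiv.subLeft (-1 : ℤ)).tsum_eq (thetaCoeff τ)
  simp only [Equiv.subLeft_apply, thetaCoeff_neg_one_sub, tsum_neg] at hreflect
  linear_combination (-1 / 2) * hreflect

lemma jacobiTheta₂_half_add_half (τ : ℂ) : jacobiTheta₂ (τ / 2 + 1 / 2) τ = 0 := by
  have hzero := tsum_thetaCoeff τ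
  simp only [thetaCoeff_eq_jacobiTheta₂_term, tsum_mul_left] at hzero
  exact (mul_eq_zero.mp hzero).resolve_left (e_ne_zero _)

lemma hasSum_half_mul_thetaCoeff_jacobiTheta₂' {τ : ℂ} (hτ : 0 < τ.im) :
    HasSum (fun m : ℤ ↦ ((m : ℂ) + 1/2) * thetaCoeff τ m)
      (e (τ / 8 + 1 / 4) / (2 * π * I) * jacobiTheta₂' (τ / 2 + 1 / 2) τ) := by
  have hπ : (π : ℂ) ≠ 0 := mod_cast Real.pi_ne_zero
  have hderiv := (hasSum_jacobiTheta₂'_term (τ / 2 + 1 / 2) hτ).mul_left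
    (e (τ / 8 + 1 / 4) / (2 * π * I))
  have hsum := hderiv.add ((summable_thetaCoeff hτ).hasSum.mul_left (1 / 2))
  rw [tsum_thetaCoeff, mul_zero, add_zero] at hsum
  refine hsum.congr_fun fun m ↦ ?_
  rw [jacobiTheta₂'_term, thetaCoeff_eq_jacobiTheta₂_term]
  field_simp

lemma I_mul_eta3 (τ : ℂ) : I * eta3 τ = ∑' m : ℤ, ((m : ℂ) + 1/2) * thetaCoeff τ m := by
  rw [eta3, ← mul_assoc, mul_neg, I_mul_I, neg_neg, one_mul]
  rfl

lemma hasSum_half_mul_thetaCoeff {τ : ℂ} (hτ : 0 < τ.im) :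
    HasSum (fun m : ℤ ↦ ((m : ℂ) + 1/2) * thetaCoeff τ m) (I * eta3 τ) := by
  rw [I_mul_eta3]
  exact (hasSum_half_mul_thetaCoeff_jacobiTheta₂' hτ).summable.hasSum

lemma eta3_eq_jacobiTheta₂' {τ : ℂ} (hτ : 0 < τ.im) :
    eta3 τ = -e (τ / 8 + 1 / 4) / (2 * π) * jacobiTheta₂' (τ / 2 + 1 / 2) τ := by
  have hπ : (π : ℂ) ≠ 0 := mod_cast Real.pi_ne_zero
  have hsum := (hasSum_half_mul_thetaCoeff hτ).unique (hasSum_half_mul_thetaCoeff_jacobiTheta₂' hτ)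
  refine mul_left_cancel₀ I_ne_zero (hsum.trans ?_)
  field_simp
  rw [I_sq]
  ring

lemma neg_I_mul_cpow_ne_zero {τ : ℂ} (hτ : τ ≠ 0) (s : ℂ) : (-I * τ) ^ s ≠ 0 := by
  simp [cpow_eq_zero_iff, hτ]

lemma eta3_neg_one_div {τ : ℂ} (hτ : 0 < τ.im) :
    eta3 (-1 / τ) = -I * τ * (-I * τ) ^ (1/2 : ℂ) * eta3 τ := by
  have hτ0 := ne_zero_of_im_pos hτ
  have hπ : (π : ℂ) ≠ 0 := mod_cast Real.pi_ne_zero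
  have hroot := neg_I_mul_cpow_ne_zero hτ0 (1 / 2)
  have harg : (τ / 2 + 1 / 2) / τ = -(-1 / τ / 2 + 1 / 2) + 1 := by
    field_simp
    ring
  have hexp : e (τ / 8 + 1 / 4) * cexp (-π * I * (τ / 2 + 1 / 2) ^ 2 / τ)
      = -I * e (-1 / τ / 8 + 1 / 4) := by
    rw [← Complex.exp_neg_pi_div_two_mul_I, e, e, ← Complex.exp_add, ← Complex.exp_add]
    congr 1
    field_simp
    ring
  rw [eta3_eq_jacobiTheta₂' hτ, eta3_eq_jacobiTheta₂' (im_neg_one_div_pos hτ),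
    jacobiTheta₂'_functional_equation (τ / 2 + 1 / 2), harg,
    jacobiTheta₂'_add_left, jacobiTheta₂_add_left, jacobiTheta₂_neg_left, jacobiTheta₂'_neg_left,
    jacobiTheta₂_half_add_half]
  generalize jacobiTheta₂' _ _ = J
  generalize e (τ / 8 + 1 / 4) = A, e (-1 / τ / 8 + 1 / 4) = B, cexp _ = C at hexp ⊢
  field_simp
  linear_combination (I * J) * hexp - J * B * I_sq

lemma thetaCoeff_add_one (τ : ℂ) (m : ℤ) : thetaCoeff (τ + 1) m = e (1 / 8) * thetaCoeff τ m := by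
  obtain ⟨k, hk⟩ : ∃ k : ℤ, m * (m + 1) = 2 * k := (Int.even_mul_succ_self m).two_dvd
  have hk' : (m : ℂ) * (m + 1) = 2 * k := mod_cast hk
  have harg : ((m : ℂ) + 1/2)^2 / 2 * (τ + 1) + ((m : ℂ) + 1/2) / 2
      = (1 / 8 + k) + (((m : ℂ) + 1/2)^2 / 2 * τ + ((m : ℂ) + 1/2) / 2) := by
    linear_combination (1 / 2) * hk'
  rw [thetaCoeff, harg, e_add, e_add, e_intCast, mul_one, thetaCoeff]

lemma eta3_add_one (τ : ℂ) : eta3 (τ + 1) = e (1 / 8) * eta3 τ := by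
  refine mul_left_cancel₀ I_ne_zero ?_
  simp only [mul_left_comm I, I_mul_eta3, thetaCoeff_add_one, ← tsum_mul_left]
  exact tsum_congr fun m ↦ mul_left_comm _ _ _

lemma hasSum_nat_odd_mul_thetaCoeff {τ : ℂ} (hτ : 0 < τ.im) :
    HasSum (fun n : ℕ ↦ (2 * (n : ℂ) + 1) * thetaCoeff τ n) (I * eta3 τ) := by
  refine (hasSum_half_mul_thetaCoeff hτ).nat_add_neg_add_one.congr_fun fun n ↦ ?_
  rw [show -((n : ℤ) + 1) = -1 - (n : ℤ) by ring, thetaCoeff_neg_one_sub]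
  push_cast
  ring

lemma norm_odd_mul_thetaCoeff_succ_le {τ : ℂ} (hτ : 0 < τ.im) (n : ℕ) :
    ‖(2 * ((n + 1 : ℕ) : ℂ) + 1) * thetaCoeff τ (n + 1 : ℕ)‖
      ≤ ‖thetaCoeff τ 0‖ * (3 * Real.exp (-2 * π * τ.im)) ^ (n + 1) := by
  have hodd : ‖2 * ((n + 1 : ℕ) : ℂ) + 1‖ ≤ 3 ^ (n + 1) := by
    have hbernoulli := one_add_mul_le_pow (show (-2 : ℝ) ≤ 2 by norm_num) (n + 1)
    calc ‖2 * ((n + 1 : ℕ) : ℂ) + 1‖ = ‖((2 * (n + 1) + 1 : ℕ) : ℂ)‖ := by push_cast; rfl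
      _ = 2 * (n + 1) + 1 := by rw [norm_natCast]; push_cast; rfl
      _ ≤ 3 ^ (n + 1) := by norm_num at hbernoulli; linarith
  have hexp : ‖thetaCoeff τ (n + 1 : ℕ)‖
      ≤ ‖thetaCoeff τ 0‖ * Real.exp (-2 * π * τ.im) ^ (n + 1) := by
    rw [norm_thetaCoeff, norm_thetaCoeff, ← Real.exp_nat_mul, ← Real.exp_add, Real.exp_le_exp]
    push_cast
    have : 0 ≤ π * τ.im * (n * (n + 1)) := by positivity
    linarith
  calc _ ≤ 3 ^ (n + 1) * (‖thetaCoeff τ 0‖ * Real.exp (-2 * π * τ.im) ^ (n + 1)) := by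
        rw [norm_mul]
        gcongr
    _ = _ := by ring

lemma eta3_ne_zero_of_exp_lt {τ : ℂ} (hτ : 0 < τ.im) (hr : 6 * Real.exp (-2 * π * τ.im) < 1) :
    eta3 τ ≠ 0 := by
  intro h0
  set r := 3 * Real.exp (-2 * π * τ.im)
  have hr0 : 0 ≤ r := by positivity
  have hr1 : r < 1 / 2 := by linarith
  have htail := (hasSum_nat_add_iff' 1).mpr (hasSum_nat_odd_mul_thetaCoeff hτ)
  have hgeom : HasSum (fun n : ℕ ↦ ‖thetaCoeff τ 0‖ * r ^ (n + 1))
      (‖thetaCoeff τ 0‖ * (r * (1 - r)⁻¹)) := by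
    simpa only [pow_succ'] using
      ((hasSum_geometric_of_lt_one hr0 (by linarith)).mul_left r).mul_left ‖thetaCoeff τ 0‖
  have hbound := tsum_of_norm_bounded hgeom (norm_odd_mul_thetaCoeff_succ_le hτ)
  have htail_norm : ‖thetaCoeff τ 0‖ ≤ ‖thetaCoeff τ 0‖ * (r * (1 - r)⁻¹) := by
    rw [htail.tsum_eq, h0] at hbound
    simpa using hbound
  have hratio : r * (1 - r)⁻¹ < 1 := by
    rw [← div_eq_mul_inv, div_lt_one (by linarith)]
    linarith
  have hpos : 0 < ‖thetaCoeff τ 0‖ := norm_pos_iff.mpr (e_ne_zero _)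
  nlinarith

lemma six_mul_exp_lt_one {v : ℝ} (hv : 0 < v) (hv2 : 3 ≤ 4 * v ^ 2) :
    6 * Real.exp (-2 * π * v) < 1 := by
  have hv5 : 5 ≤ 2 * π * v := by
    have : 0.86 ≤ v := by nlinarith
    nlinarith [Real.pi_gt_three]
  have hexp5 := Real.add_one_lt_exp (show (5 : ℝ) ≠ 0 by norm_num)
  have hle : Real.exp 5 ≤ Real.exp (2 * π * v) := Real.exp_le_exp.mpr hv5
  rw [neg_mul, neg_mul, Real.exp_neg, ← div_eq_mul_inv, div_lt_one (Real.exp_pos _)]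
  linarith

lemma eta3_smul_eq_zero_iff (g : Matrix.SpecialLinearGroup (Fin 2) ℤ) (z : UpperHalfPlane) :
    eta3 (g • z : UpperHalfPlane) = 0 ↔ eta3 z = 0 := by
  have hg : g ∈ Subgroup.closure {ModularGroup.S, ModularGroup.T} := by
    simp [SpecialLinearGroup.SL2Z_generators]
  induction hg using Subgroup.closure_induction generalizing z with
  | one => simp
  | mem g hg =>
    rcases hg with rfl | rfl
    · have hS : ((ModularGroup.S • z : UpperHalfPlane) : ℂ) = -1 / z := by
        rw [UpperHalfPlane.modular_S_smul, UpperHalfPlane.coe_mk, inv_neg, neg_div, one_div]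
      rw [hS, eta3_neg_one_div z.im_pos]
      simp [z.ne_zero]
    · rw [UpperHalfPlane.modular_T_smul, UpperHalfPlane.coe_vadd, ofReal_one, add_comm,
        eta3_add_one]
      simp [e_ne_zero]
  | mul g g' _ _ hg hg' => rw [mul_smul]; exact (hg _).trans (hg' z)
  | inv g _ hg => simpa using (hg (g⁻¹ • z)).symm

lemma eta3_ne_zero {τ : ℂ} (hτ : 0 < τ.im) : eta3 τ ≠ 0 := by
  obtain ⟨g, hg⟩ := ModularGroup.exists_smul_mem_fd ⟨τ, hτ⟩
  have him := ModularGroup.three_le_four_mul_im_sq_of_mem_fd hg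
  have hpos := (g • (⟨τ, hτ⟩ : UpperHalfPlane)).im_pos
  exact (eta3_smul_eq_zero_iff g ⟨τ, hτ⟩).not.mp
    (eta3_ne_zero_of_exp_lt hpos (six_mul_exp_lt_one hpos him))

/-- The nonholomorphic, modular completion `E₂* = E₂ - 3/(πv)` of the weight 2 Eisenstein
series. -/
noncomputable def E2star (τ : ℂ) : ℂ := E2 τ - 3 / (π * τ.im)

lemma E2_eq_eisensteinSeries (z : UpperHalfPlane) : E2 z = EisensteinSeries.E2 z := by
  rw [EisensteinSeries.E2_eq_tsum_cexp, E2, tsum_pnat_eq_tsum_succ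
    (f := fun n : ℕ ↦ ((ArithmeticFunction.sigma 1 n : ℕ) : ℂ) * cexp (2 * π * I * z) ^ n)]
  congr 2
  refine tsum_congr fun n ↦ ?_
  congr 1
  · simp [sigma1, ArithmeticFunction.sigma_apply]
  · rw [e, ← Complex.exp_nat_mul]
    push_cast
    ring_nf

lemma E2_neg_one_div {τ : ℂ} (hτ : 0 < τ.im) :
    E2 (-1 / τ) = τ ^ 2 * E2 τ - 6 * I * τ / π := by
  have hτ0 := ne_zero_of_im_pos hτ
  have hπ : (π : ℂ) ≠ 0 := mod_cast Real.pi_ne_zero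
  have hslash := congrFun (EisensteinSeries.E2_slash_action ModularGroup.S) ⟨τ, hτ⟩
  rw [SlashInvariantForm.slash_S_apply] at hslash
  simp only [Pi.sub_apply, Pi.smul_apply, EisensteinSeries.D2_S, ← E2_eq_eisensteinSeries,
    riemannZeta_two, smul_eq_mul] at hslash
  rw [show (-τ)⁻¹ = -1 / τ by rw [inv_neg, neg_div, one_div], zpow_neg,
    mul_inv_eq_iff_eq_mul₀ (zpow_ne_zero 2 hτ0)] at hslash
  rw [hslash, zpow_ofNat]
  field_simp

lemma E2star_neg_one_div {τ : ℂ} (hτ : 0 < τ.im) : E2star (-1 / τ) = τ ^ 2 * E2star τ := by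
  have hτ0 := ne_zero_of_im_pos hτ
  have hπ : (π : ℂ) ≠ 0 := mod_cast Real.pi_ne_zero
  have hv : (τ.im : ℂ) ≠ 0 := mod_cast hτ.ne'
  have hnormSq : (normSq τ : ℂ) = τ * (τ - 2 * I * τ.im) := by
    rw [← mul_conj]
    congr 1
    apply Complex.ext <;> simp
    ring
  rw [E2star, E2star, E2_neg_one_div hτ, im_neg_one_div, ofReal_div, hnormSq]
  field_simp
  ring

/-! ### The complementary error function -/

lemma integrable_exp_neg_sq : Integrable (fun t : ℝ ↦ Real.exp (-t^2)) := by
  simpa using integrable_exp_neg_mul_sq one_pos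

lemma erfc_neg (x : ℝ) : erfc (-x) = 2 - erfc x := by
  have hreflect : ∫ t in Set.Ioi (-x), Real.exp (-t^2) = ∫ t in Set.Iic x, Real.exp (-t^2) := by
    rw [← integral_comp_neg_Iic]
    simp
  have hsplit := intervalIntegral.integral_Iic_add_Ioi (b := x)
    integrable_exp_neg_sq.integrableOn integrable_exp_neg_sq.integrableOn
  have hgauss : ∫ t : ℝ, Real.exp (-t^2) = √π := by simpa using integral_gaussian 1
  have hπ : √π ≠ 0 := by positivity
  rw [hgauss] at hsplit
  rw [erfc, erfc, hreflect]
  field_simp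
  linarith

lemma erfc_zero : erfc 0 = 1 := by
  have h := erfc_neg 0
  rw [neg_zero] at h
  linarith

lemma erfc_nonneg (x : ℝ) : 0 ≤ erfc x :=
  mul_nonneg (by positivity) (integral_nonneg fun _ ↦ (Real.exp_pos _).le)

lemma erfc_le_two (x : ℝ) : erfc x ≤ 2 := by
  linarith [erfc_nonneg (-x), erfc_neg x]

lemma erfc_le_exp_neg_sq {x : ℝ} (hx : 0 ≤ x) : erfc x ≤ Real.exp (-x^2) := by
  have hshift : ∫ t in Set.Ioi x, Real.exp (-t^2)
      = ∫ t in Set.Ioi (0 : ℝ), Real.exp (-(t + x)^2) := by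
    rw [← integral_indicator measurableSet_Ioi, ← integral_indicator measurableSet_Ioi,
      ← integral_add_right_eq_self _ x]
    simp only [Set.indicator_apply, Set.mem_Ioi, lt_add_iff_pos_left]
  have hle : ∫ t in Set.Ioi (0 : ℝ), Real.exp (-(t + x)^2)
      ≤ ∫ t in Set.Ioi (0 : ℝ), Real.exp (-x^2) * Real.exp (-t^2) := by
    refine setIntegral_mono_on (integrable_exp_neg_sq.comp_add_right x).integrableOn
      (integrable_exp_neg_sq.const_mul _).integrableOn measurableSet_Ioi fun t ht ↦ ?_
    rw [← Real.exp_add, Real.exp_le_exp]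
    nlinarith [mul_nonneg (le_of_lt ht) hx]
  rw [integral_const_mul] at hle
  calc erfc x ≤ 2 / √π * (Real.exp (-x^2) * ∫ t in Set.Ioi (0 : ℝ), Real.exp (-t^2)) := by
        rw [erfc, hshift]
        gcongr
    _ = Real.exp (-x^2) * erfc 0 := by rw [erfc]; ring
    _ = Real.exp (-x^2) := by rw [erfc_zero, mul_one]

lemma hasDerivAt_erfc (x : ℝ) : HasDerivAt erfc (-(2 / √π) * Real.exp (-x^2)) x := by
  have hcont : Continuous (fun t : ℝ ↦ Real.exp (-t^2)) := by fun_prop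
  have herfc : erfc = fun y ↦ 2 / √π *
      ((∫ t in Set.Ioi (0 : ℝ), Real.exp (-t^2)) - ∫ t in (0 : ℝ)..y, Real.exp (-t^2)) := by
    funext y
    rw [erfc, ← intervalIntegral.integral_Ioi_sub_Ioi' integrable_exp_neg_sq.integrableOn
      integrable_exp_neg_sq.integrableOn, sub_sub_cancel]
  rw [herfc]
  have hint := intervalIntegral.integral_hasDerivAt_right (hcont.intervalIntegrable 0 x)
    hcont.stronglyMeasurable.stronglyMeasurableAtFilter hcont.continuousAt
  exact ((hint.const_sub _).const_mul (2 / √π)).congr_deriv (by ring)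

lemma sign_mul_erfc_abs (s x : ℝ) :
    Real.sign x * erfc (s * |x|) = Real.sign x - (1 - erfc (s * x)) := by
  rcases lt_trichotomy x 0 with hx | rfl | hx
  · rw [Real.sign_of_neg hx, abs_of_neg hx, mul_neg, erfc_neg]
    ring
  · simp [erfc_zero]
  · rw [Real.sign_of_pos hx, abs_of_pos hx]
    ring

lemma abs_sub_mul_one_sub_erfc_le (a y : ℝ) : |(|a| - a * (1 - erfc y))| ≤ 2 * |a| := by
  have herf : |1 - erfc y| ≤ 1 := abs_le.mpr ⟨by linarith [erfc_le_two y],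
    by linarith [erfc_nonneg y]⟩
  calc |(|a| - a * (1 - erfc y))| ≤ |(|a|)| + |a * (1 - erfc y)| := abs_sub _ _
    _ ≤ |a| + |a| * 1 := by
      rw [abs_abs, abs_mul]
      gcongr
    _ = 2 * |a| := by ring

lemma abs_sub_mul_one_sub_erfc_le_of_nonneg {a y : ℝ} (hay : 0 ≤ a * y) :
    |(|a| - a * (1 - erfc y))| ≤ |a| * Real.exp (-y^2) := by
  rcases lt_trichotomy a 0 with ha | rfl | ha
  · have hy : 0 ≤ -y := by nlinarith
    have hdiff : |a| - a * (1 - erfc y) = |a| * erfc (-y) := by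
      rw [abs_of_neg ha, erfc_neg]
      ring
    rw [hdiff, abs_mul, abs_abs, abs_of_nonneg (erfc_nonneg _)]
    exact mul_le_mul_of_nonneg_left (by simpa using erfc_le_exp_neg_sq hy) (abs_nonneg a)
  · simp
  · have hy : 0 ≤ y := nonneg_of_mul_nonneg_right hay ha
    have hdiff : |a| - a * (1 - erfc y) = |a| * erfc y := by
      rw [abs_of_pos ha]
      ring
    rw [hdiff, abs_mul, abs_abs, abs_of_nonneg (erfc_nonneg _)]
    exact mul_le_mul_of_nonneg_left (erfc_le_exp_neg_sq hy) (abs_nonneg a)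

/-! ### Boosts of the hyperbolic plane and the smoothed absolute value -/

/-- The timelike coordinate `M_c` of the point with light-cone coordinates `a = M + X`,
`b = M - X`, after the boost `(a, b) ↦ (c a, b / c)`. -/
noncomputable def boostM (c a b : ℝ) : ℝ := (c * a + b / c) / 2

/-- The spacelike coordinate `X_c` of the point with light-cone coordinates `a = M + X`,
`b = M - X`, after the boost `(a, b) ↦ (c a, b / c)`. -/
noncomputable def boostX (c a b : ℝ) : ℝ := (c * a - b / c) / 2

/-- A smoothing of `|a|` by the error function of the boosted spacelike coordinate; the Gaussian
term makes the derivative in the boost parameter `c` a Gaussian times a polynomial. -/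
noncomputable def smoothAbs (v c a b : ℝ) : ℝ :=
  a * (1 - erfc (√(2 * π * v) * boostX c a b))
    + 1 / c * (Real.exp (-2 * π * v * boostX c a b ^ 2) / (π * √(2 * v)))

lemma boostX_one (M X : ℝ) : boostX 1 (M + X) (M - X) = X := by
  rw [boostX]
  ring

lemma sqrt_mul_sq {v : ℝ} (hv : 0 < v) (x : ℝ) :
    (√(2 * π * v) * x) ^ 2 = 2 * π * v * x ^ 2 := by
  rw [mul_pow, Real.sq_sqrt (by positivity)]

lemma abs_abs_sub_smoothAbs_le {v c : ℝ} (hv : 0 < v) (hc : 1 ≤ c) (a b : ℝ) :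
    |(|a| - smoothAbs v c a b)| ≤
      |(|a| - a * (1 - erfc (√(2 * π * v) * boostX c a b)))|
        + 1 / (π * √(2 * v)) * Real.exp (-2 * π * v * boostX c a b ^ 2) := by
  have hc1 : 1 / c ≤ 1 := (div_le_one (by linarith)).mpr hc
  have hc0 : 0 ≤ 1 / c := by positivity
  rw [smoothAbs, ← sub_sub]
  refine (abs_sub _ _).trans (add_le_add_right ?_ _)
  rw [abs_of_nonneg (by positivity), div_mul_eq_mul_div 1 (π * √(2 * v)), one_mul]
  exact mul_le_of_le_one_left (by positivity) hc1

lemma abs_abs_sub_smoothAbs_le_of_nonneg {v c a b : ℝ} (hv : 0 < v) (hc : 1 ≤ c)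
    (h : 0 ≤ a * boostX c a b) :
    |(|a| - smoothAbs v c a b)| ≤
      (|a| + 1 / (π * √(2 * v))) * Real.exp (-2 * π * v * boostX c a b ^ 2) := by
  have herf : |(|a| - a * (1 - erfc (√(2 * π * v) * boostX c a b)))|
      ≤ |a| * Real.exp (-2 * π * v * boostX c a b ^ 2) := by
    have hy : 0 ≤ a * (√(2 * π * v) * boostX c a b) := by
      rw [mul_left_comm]
      positivity
    refine (abs_sub_mul_one_sub_erfc_le_of_nonneg hy).trans_eq ?_
    rw [sqrt_mul_sq hv]
    ring_nf
  rw [add_mul]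
  exact (abs_abs_sub_smoothAbs_le hv hc a b).trans (by gcongr)

/-- Where the smoothing has the wrong sign, `0 < c² a² < a b`, and the decay comes from
`exp (-π v a b)` itself. -/
lemma exp_mul_abs_abs_sub_smoothAbs_le {v c a b D : ℝ} (hv : 0 < v) (hc : 1 ≤ c)
    (hD_pos : 0 < a * b → D ≤ a * b) (hD : D ≤ a * b + 2 * boostX c a b ^ 2) :
    Real.exp (-π * v * (a * b)) * |(|a| - smoothAbs v c a b)| ≤
      (2 * |a| + 1 / (π * √(2 * v))) * Real.exp (-π * v * D) := by
  have hπv : 0 < π * v := by positivity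
  have hgauss : Real.exp (-π * v * (a * b)) * Real.exp (-2 * π * v * boostX c a b ^ 2)
      ≤ Real.exp (-π * v * D) := by
    rw [← Real.exp_add, Real.exp_le_exp]
    nlinarith [mul_le_mul_of_nonneg_left hD hπv.le]
  by_cases h : 0 ≤ a * boostX c a b
  · calc _ ≤ Real.exp (-π * v * (a * b)) *
          ((|a| + 1 / (π * √(2 * v))) * Real.exp (-2 * π * v * boostX c a b ^ 2)) := by
          gcongr
          exact abs_abs_sub_smoothAbs_le_of_nonneg hv hc h
      _ = (|a| + 1 / (π * √(2 * v))) *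
          (Real.exp (-π * v * (a * b)) * Real.exp (-2 * π * v * boostX c a b ^ 2)) := by ring
      _ ≤ _ := by
          gcongr
          linarith [abs_nonneg a]
  · have hab : 0 < a * b := by
      have hboost : a * boostX c a b * (2 * c) = c ^ 2 * a ^ 2 - a * b := by
        rw [boostX]
        field_simp
      nlinarith [mul_nonneg (sq_nonneg c) (sq_nonneg a)]
    have hexp : Real.exp (-π * v * (a * b)) ≤ Real.exp (-π * v * D) := by
      rw [Real.exp_le_exp]
      nlinarith [mul_le_mul_of_nonneg_left (hD_pos hab) hπv.le]
    calc _ ≤ Real.exp (-π * v * (a * b)) *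
          (2 * |a| + 1 / (π * √(2 * v)) * Real.exp (-2 * π * v * boostX c a b ^ 2)) := by
          gcongr
          exact (abs_abs_sub_smoothAbs_le hv hc a b).trans
            (add_le_add_left (abs_sub_mul_one_sub_erfc_le _ _) _)
      _ = 2 * |a| * Real.exp (-π * v * (a * b)) + 1 / (π * √(2 * v)) *
          (Real.exp (-π * v * (a * b)) * Real.exp (-2 * π * v * boostX c a b ^ 2)) := by ring
      _ ≤ 2 * |a| * Real.exp (-π * v * D) + 1 / (π * √(2 * v)) * Real.exp (-π * v * D) := by
          gcongr
      _ = _ := by ring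

lemma tendsto_mul_boostX_atTop {a : ℝ} (ha : a ≠ 0) (b : ℝ) :
    Tendsto (fun c ↦ a * boostX c a b) atTop atTop := by
  have hlin : Tendsto (fun c : ℝ ↦ a ^ 2 / 2 * c) atTop atTop :=
    tendsto_id.const_mul_atTop (by positivity)
  have hinv : Tendsto (fun c : ℝ ↦ -(a * b / 2) / c) atTop (𝓝 0) :=
    tendsto_const_nhds.div_atTop tendsto_id
  refine (hlin.atTop_add hinv).congr fun c ↦ ?_
  rw [boostX]
  ring

lemma tendsto_smoothAbs {v a : ℝ} (hv : 0 < v) (ha : a ≠ 0) (b : ℝ) :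
    Tendsto (fun c ↦ smoothAbs v c a b) atTop (𝓝 |a|) := by
  have hX := tendsto_mul_boostX_atTop ha b
  have hgauss : Tendsto (fun c ↦ Real.exp (-2 * π * v * boostX c a b ^ 2)) atTop (𝓝 0) := by
    have hneg : -2 * π * v / a ^ 2 < 0 :=
      div_neg_of_neg_of_pos (by nlinarith [mul_pos Real.pi_pos hv]) (by positivity)
    refine Real.tendsto_exp_atBot.comp
      ((((tendsto_pow_atTop two_ne_zero).comp hX).const_mul_atTop_of_neg hneg).congr fun c ↦ ?_)
    simp only [Function.comp_apply]
    field_simp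
  have hmajorant : Tendsto (fun c ↦ (|a| + 1 / (π * √(2 * v))) *
      Real.exp (-2 * π * v * boostX c a b ^ 2)) atTop (𝓝 0) := by
    simpa using hgauss.const_mul (|a| + 1 / (π * √(2 * v)))
  rw [tendsto_iff_norm_sub_tendsto_zero]
  refine squeeze_zero' (Eventually.of_forall fun _ ↦ norm_nonneg _) ?_ hmajorant
  filter_upwards [hX.eventually_ge_atTop 0, eventually_ge_atTop 1] with c hXc hc
  rw [Real.norm_eq_abs, abs_sub_comm]
  exact abs_abs_sub_smoothAbs_le_of_nonneg hv hc hXc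

/-! ### The summand `g_τ` as a theta-like sum -/

lemma summable_thetaCoeff_mul {τ : ℂ} (hτ : 0 < τ.im) {f : ℝ → ℝ} {K : ℝ}
    (hf : ∀ M, |f M| ≤ |M| + K) :
    Summable (fun m : ℤ ↦ thetaCoeff τ m * f ((m : ℝ) + 1/2)) := by
  have hmajorant := (hasSum_half_mul_thetaCoeff hτ).summable.norm.add
    ((summable_thetaCoeff hτ).norm.mul_left K)
  refine hmajorant.of_norm_bounded fun m ↦ ?_
  have hnorm : ‖(m : ℂ) + 1/2‖ = |(m : ℝ) + 1/2| := by
    rw [← Real.norm_eq_abs, ← Complex.norm_real]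
    push_cast
    rfl
  rw [norm_mul, norm_mul, Complex.norm_real, Real.norm_eq_abs, hnorm]
  nlinarith [hf ((m : ℝ) + 1/2), norm_nonneg (thetaCoeff τ m)]

/-- Only the odd part of `f` contributes, because the coefficients are odd. -/
lemma hasSum_thetaCoeff_mul_of_odd_part_eq {τ S : ℂ} {f g : ℝ → ℝ}
    (hf : HasSum (fun m : ℤ ↦ thetaCoeff τ m * f ((m : ℝ) + 1/2)) S)
    (hg : Summable (fun m : ℤ ↦ thetaCoeff τ m * g ((m : ℝ) + 1/2)))
    (hfg : ∀ M, f M - f (-M) = g M - g (-M)) :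
    HasSum (fun m : ℤ ↦ thetaCoeff τ m * g ((m : ℝ) + 1/2)) S := by
  have hdiff := hg.hasSum.sub hf
  have hreflect := ((Equiv.subLeft (-1 : ℤ)).hasSum_iff.mpr hdiff).neg
  have hzero := hdiff.unique (hreflect.congr_fun fun m ↦ by
    have hm : (((-1 - m : ℤ) : ℝ) + 1/2) = -((m : ℝ) + 1/2) := by push_cast; ring
    have heven : (f ((m : ℝ) + 1/2) : ℂ) - f (-((m : ℝ) + 1/2))
        = g ((m : ℝ) + 1/2) - g (-((m : ℝ) + 1/2)) := mod_cast hfg _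
    simp only [Function.comp_apply, Equiv.subLeft_apply, thetaCoeff_neg_one_sub, hm]
    linear_combination (-thetaCoeff τ m) * heven)
  have hS : ∑' m : ℤ, thetaCoeff τ m * g ((m : ℝ) + 1/2) = S := by
    linear_combination (1 / 2) * hzero
  exact hS ▸ hg.hasSum

lemma sign_mul_odd_part_max (M X : ℝ) :
    Real.sign X * (M - 2 * max (M - |X|) 0) - Real.sign X * (-M - 2 * max (-M - |X|) 0)
      = |M + X| - |-M + X| := by
  rw [show -M + X = -(M - X) by ring, abs_neg]
  rcases lt_trichotomy X 0 with hX | rfl | hX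
  · rw [Real.sign_of_neg hX, abs_of_neg hX]
    grind [abs_eq_max_neg]
  · simp
  · rw [Real.sign_of_pos hX, abs_of_pos hX]
    grind [abs_eq_max_neg]

lemma hasSum_thetaCoeff_mul_abs_add {τ : ℂ} (hτ : 0 < τ.im) (X : ℝ) :
    HasSum (fun m : ℤ ↦ thetaCoeff τ m * (|(m : ℝ) + 1/2 + X| : ℝ))
      (Real.sign X * (I * eta3 τ
        - 2 * ∑' m : ℤ, thetaCoeff τ m * (max ((m : ℝ) + 1/2 - |X|) 0 : ℝ))) := by
  have hmax : Summable (fun m : ℤ ↦ thetaCoeff τ m * (max ((m : ℝ) + 1/2 - |X|) 0 : ℝ)) := by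
    refine summable_thetaCoeff_mul hτ (f := fun M ↦ max (M - |X|) 0) (K := |X|) fun M ↦ ?_
    rw [abs_of_nonneg (le_max_right _ _)]
    exact max_le (by linarith [le_abs_self M, abs_nonneg X]) (by positivity)
  have habs : Summable (fun m : ℤ ↦ thetaCoeff τ m * (|(m : ℝ) + 1/2 + X| : ℝ)) :=
    summable_thetaCoeff_mul hτ (f := fun M ↦ |M + X|) (K := |X|) fun M ↦ by
      rw [abs_abs]
      exact abs_add_le M X
  have hclipped := ((hasSum_half_mul_thetaCoeff hτ).sub (hmax.hasSum.mul_left 2)).mul_left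
    (Real.sign X : ℂ)
  refine hasSum_thetaCoeff_mul_of_odd_part_eq
    (f := fun M ↦ Real.sign X * (M - 2 * max (M - |X|) 0)) (g := fun M ↦ |M + X|)
    (hclipped.congr_fun fun m ↦ ?_) habs (sign_mul_odd_part_max · X)
  push_cast
  ring

lemma gplus_eq_tsum_max (τ : ℂ) (X : ℝ) :
    gplus τ X = e (-(X : ℂ)^2 * τ / 2) * ((Real.sign X : ℂ) / (I * eta3 τ)) *
      ∑' m : ℤ, thetaCoeff τ m * (max ((m : ℝ) + 1/2 - |X|) 0 : ℝ) := by
  rw [gplus]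
  congr 1
  refine tsum_congr fun m ↦ ?_
  split_ifs with hm
  · rw [max_eq_left (by linarith), thetaCoeff, mul_comm]
  · rw [max_eq_right (by linarith), ofReal_zero, mul_zero]

lemma hasSum_thetaCoeff_mul_smoothAbs_one {τ : ℂ} (hτ : 0 < τ.im) (X : ℝ) :
    HasSum (fun m : ℤ ↦ thetaCoeff τ m *
        (smoothAbs τ.im 1 ((m : ℝ) + 1/2 + X) ((m : ℝ) + 1/2 - X) : ℝ))
      ((1 - erfc (√(2 * π * τ.im) * X) : ℝ) * (I * eta3 τ)) := by
  set erf : ℝ := 1 - erfc (√(2 * π * τ.im) * X) with herf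
  set K : ℝ := erf * X + Real.exp (-2 * π * τ.im * X ^ 2) / (π * √(2 * τ.im)) with hK
  have hconst : HasSum (thetaCoeff τ) 0 := tsum_thetaCoeff τ ▸ (summable_thetaCoeff hτ).hasSum
  have hsum := ((hasSum_half_mul_thetaCoeff hτ).mul_left (erf : ℂ)).add (hconst.mul_left (K : ℂ))
  rw [mul_zero, add_zero] at hsum
  refine hsum.congr_fun fun m ↦ ?_
  have hsmooth : smoothAbs τ.im 1 ((m : ℝ) + 1/2 + X) ((m : ℝ) + 1/2 - X)
      = erf * ((m : ℝ) + 1/2) + K := by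
    rw [smoothAbs, boostX_one, ← herf, hK]
    ring
  rw [hsmooth]
  push_cast
  ring

lemma hasSum_smoothAbs_one_sub_abs {τ : ℂ} (hτ : 0 < τ.im) (X : ℝ) :
    HasSum (fun m : ℤ ↦ e (-(X : ℂ)^2 * τ / 2) * thetaCoeff τ m *
        (smoothAbs τ.im 1 ((m : ℝ) + 1/2 + X) ((m : ℝ) + 1/2 - X) - |(m : ℝ) + 1/2 + X| : ℝ))
      (2 * (I * eta3 τ) * gfun τ X) := by
  have hsign : (Real.sign X : ℂ) * (erfc (√(2 * π * τ.im) * |X|) : ℂ)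
      = Real.sign X - (1 - erfc (√(2 * π * τ.im) * X) : ℝ) := mod_cast sign_mul_erfc_abs _ X
  have hsum := ((hasSum_thetaCoeff_mul_smoothAbs_one hτ X).sub
    (hasSum_thetaCoeff_mul_abs_add hτ X)).mul_left (e (-(X : ℂ)^2 * τ / 2))
  suffices hvalue : 2 * (I * eta3 τ) * gfun τ X = e (-(X : ℂ)^2 * τ / 2) *
      ((1 - erfc (√(2 * π * τ.im) * X) : ℝ) * (I * eta3 τ) - Real.sign X * (I * eta3 τ
        - 2 * ∑' m : ℤ, thetaCoeff τ m * (max ((m : ℝ) + 1/2 - |X|) 0 : ℝ))) by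
    rw [hvalue]
    refine hsum.congr_fun fun m ↦ ?_
    push_cast
    ring
  rw [gfun, gplus_eq_tsum_max, gstar]
  generalize (∑' m : ℤ, thetaCoeff τ m * (max ((m : ℝ) + 1/2 - |X|) 0 : ℝ)) = R
  generalize e (-(X : ℂ)^2 * τ / 2) = E
  have hη := eta3_ne_zero hτ
  field_simp
  linear_combination (-I * eta3 τ * E) * hsign

/-! ### The indefinite lattice sum -/

/-- The light-cone coordinate `a = M + X` of the lattice point `q = (n, m)`, where
`M = m + 1/2` and `X = N n + h`. -/
noncomputable def coneA (N : ℕ) (h : ℝ) (q : ℤ × ℤ) : ℝ := (q.2 : ℝ) + 1/2 + ((N : ℝ) * q.1 + h)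

/-- The light-cone coordinate `b = M - X` of the lattice point `q = (n, m)`, where
`M = m + 1/2` and `X = N n + h`. -/
noncomputable def coneB (N : ℕ) (h : ℝ) (q : ℤ × ℤ) : ℝ := (q.2 : ℝ) + 1/2 - ((N : ℝ) * q.1 + h)

/-- The summand `e((M² - X²)τ/2 + M/2)` of the indefinite theta series, where `M = m + 1/2` and
`X = N n + h` at `q = (n, m)`. -/
noncomputable def indefTerm (N : ℕ) (h : ℝ) (τ : ℂ) (q : ℤ × ℤ) : ℂ :=
  e (-(((N : ℝ) * q.1 + h : ℝ) : ℂ)^2 * τ / 2) * thetaCoeff τ q.2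

/-- The summand of the indefinite theta series, weighted by the difference between `|a|` and its
smoothing in the frame of boost parameter `c`. -/
noncomputable def defect (N : ℕ) (h : ℝ) (τ : ℂ) (c : ℝ) (q : ℤ × ℤ) : ℂ :=
  indefTerm N h τ q * (smoothAbs τ.im c (coneA N h q) (coneB N h q) - |coneA N h q| : ℝ)

/-- A summable bound for `defect N h τ c` at the lattice points with `a ≠ 0`, uniform in `c ≥ 1`;
here `v` stands for `τ.im`. -/
noncomputable def defectBound (N : ℕ) (h v : ℝ) (q : ℤ × ℤ) : ℝ :=
  (2 * |coneA N h q| + 1 / (π * √(2 * v))) *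
    Real.exp (-π * v * ((|coneA N h q| + |coneB N h q|) / (2 * (2 * N))))

/-- The lattice points with `a = 0`. -/
def isotropicLine (N : ℕ) (h : ℝ) : Set (ℤ × ℤ) := {q | coneA N h q = 0}

section Lattice

variable {N : ℕ} {h c : ℝ} {τ : ℂ}

lemma norm_indefTerm (N : ℕ) (h : ℝ) (τ : ℂ) (q : ℤ × ℤ) :
    ‖indefTerm N h τ q‖ = Real.exp (-π * τ.im * (coneA N h q * coneB N h q)) := by
  have him : (-(((N : ℝ) * q.1 + h : ℝ) : ℂ)^2 * τ / 2).im
      = -((N : ℝ) * q.1 + h)^2 / 2 * τ.im := by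
    rw [← Complex.im_ofReal_mul]
    push_cast
    ring_nf
  rw [indefTerm, norm_mul, norm_e, norm_thetaCoeff, ← Real.exp_add, him, coneA, coneB]
  ring_nf

lemma summable_exp_neg_mul_abs_int {ε α : ℝ} (hε : 0 < ε) (hα : α ≠ 0) (β : ℝ) :
    Summable (fun n : ℤ ↦ Real.exp (-ε * |α * n + β|)) := by
  have hδ : -(ε * |α|) < 0 := neg_lt_zero.mpr (by positivity)
  have hbase : Summable (fun n : ℤ ↦ Real.exp (-(ε * |α|) * |(n : ℝ)|)) := by
    apply Summable.of_nat_of_neg <;>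
      exact (Real.summable_exp_nat_mul_iff.mpr hδ).congr fun n ↦ by simp [mul_comm]
  refine Summable.of_nonneg_of_le (fun _ ↦ (Real.exp_pos _).le) (fun n ↦ ?_)
    (hbase.mul_left (Real.exp (ε * |β|)))
  have htriangle : |α| * |(n : ℝ)| ≤ |α * n + β| + |β| := by
    rw [← abs_mul]
    simpa using abs_sub (α * n + β) β
  rw [← Real.exp_add, Real.exp_le_exp]
  linear_combination ε * htriangle

lemma abs_add_abs_le_abs_add_add_abs_sub (x y : ℝ) : |x| + |y| ≤ |y + x| + |y - x| := by
  cases abs_cases x <;> cases abs_cases y <;> cases abs_cases (y + x) <;>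
    cases abs_cases (y - x) <;> linarith

lemma summable_exp_neg_mul_abs_cone (hN : 0 < N) (h : ℝ) {ε : ℝ} (hε : 0 < ε) :
    Summable (fun q : ℤ × ℤ ↦ Real.exp (-ε * (|coneA N h q| + |coneB N h q|))) := by
  have hX := summable_exp_neg_mul_abs_int hε (α := N) (by positivity) h
  have hM := summable_exp_neg_mul_abs_int hε one_ne_zero (1 / 2)
  refine Summable.of_nonneg_of_le (fun _ ↦ (Real.exp_pos _).le) (fun q ↦ ?_)
    (hX.mul_of_nonneg hM (fun _ ↦ (Real.exp_pos _).le) (fun _ ↦ (Real.exp_pos _).le))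
  rw [← Real.exp_add, Real.exp_le_exp, one_mul, coneA, coneB]
  linear_combination ε * abs_add_abs_le_abs_add_add_abs_sub (N * q.1 + h) (q.2 + 1 / 2)

lemma add_mul_exp_neg_two_mul_le {ε t K : ℝ} (hε : 0 < ε) (ht : 0 ≤ t) (hK : 0 ≤ K) :
    (2 * t + K) * Real.exp (-(2 * ε) * t) ≤ (2 / ε + K) * Real.exp (-ε * t) := by
  have hexp : ε * t ≤ Real.exp (ε * t) := by linarith [Real.add_one_le_exp (ε * t)]
  have hone : 1 ≤ Real.exp (ε * t) := Real.one_le_exp (by positivity)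
  have hlin : 2 * t + K ≤ (2 / ε + K) * Real.exp (ε * t) := by
    calc 2 * t + K = 2 / ε * (ε * t) + K * 1 := by field_simp
      _ ≤ 2 / ε * Real.exp (ε * t) + K * Real.exp (ε * t) := by gcongr
      _ = _ := by ring
  calc _ ≤ (2 / ε + K) * Real.exp (ε * t) * Real.exp (-(2 * ε) * t) := by gcongr
    _ = _ := by
      rw [mul_assoc, ← Real.exp_add]
      ring_nf

lemma summable_defectBound (hN : 0 < N) (h : ℝ) {v : ℝ} (hv : 0 < v) :
    Summable (defectBound N h v) := by
  set ε := π * v / (8 * N) with hε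
  have hεpos : 0 < ε := by positivity
  refine Summable.of_nonneg_of_le (fun q ↦ by rw [defectBound]; positivity) (fun q ↦ ?_)
    ((summable_exp_neg_mul_abs_cone hN h hεpos).mul_left (2 / ε + 1 / (π * √(2 * v))))
  have hexp : -π * v * ((|coneA N h q| + |coneB N h q|) / (2 * (2 * N)))
      = -(2 * ε) * (|coneA N h q| + |coneB N h q|) := by
    rw [hε]
    ring
  rw [defectBound, hexp]
  refine le_trans ?_ (add_mul_exp_neg_two_mul_le hεpos (by positivity) (by positivity))
  gcongr
  exact le_add_of_nonneg_right (abs_nonneg _)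

lemma one_le_mul_abs_of_mul_eq_intCast {R a : ℝ} (hR : 0 < R) {A : ℤ} (hA : R * a = A)
    (ha : a ≠ 0) : 1 ≤ R * |a| := by
  have hA0 : A ≠ 0 := by
    rintro rfl
    simp [hR.ne', ha] at hA
  rw [← abs_of_pos hR, ← abs_mul, hA]
  exact_mod_cast Int.one_le_abs hA0

lemma one_le_mul_abs_coneA (hN : 0 < N) (hh : ∃ k : ℤ, h = (k : ℝ) / N) {q : ℤ × ℤ}
    (hq : coneA N h q ≠ 0) : 1 ≤ 2 * N * |coneA N h q| := by
  obtain ⟨k, rfl⟩ := hh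
  refine one_le_mul_abs_of_mul_eq_intCast (A := 2 * N * q.2 + N + 2 * N * N * q.1 + 2 * k)
    (by positivity) ?_ hq
  rw [coneA]
  push_cast
  field_simp
  ring

lemma one_le_mul_abs_coneB (hN : 0 < N) (hh : ∃ k : ℤ, h = (k : ℝ) / N) {q : ℤ × ℤ}
    (hq : coneB N h q ≠ 0) : 1 ≤ 2 * N * |coneB N h q| := by
  obtain ⟨k, rfl⟩ := hh
  refine one_le_mul_abs_of_mul_eq_intCast (A := 2 * N * q.2 + N - 2 * N * N * q.1 - 2 * k)
    (by positivity) ?_ hq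
  rw [coneB]
  push_cast
  field_simp
  ring

lemma abs_add_abs_div_le_abs_mul {R a b : ℝ} (hR : 0 < R) (ha : 1 ≤ R * |a|) (hb : 1 ≤ R * |b|) :
    (|a| + |b|) / (2 * R) ≤ |a * b| := by
  rw [div_le_iff₀ (by positivity), abs_mul]
  linear_combination |b| * ha + |a| * hb

lemma abs_div_le_sq_div_two {R a : ℝ} (hR : 0 < R) (ha : a ≠ 0 → 1 ≤ R * |a|) :
    |a| / (2 * R) ≤ a ^ 2 / 2 := by
  rcases eq_or_ne a 0 with rfl | ha0
  · simp
  · rw [div_le_iff₀ (by positivity), ← sq_abs]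
    linear_combination |a| * ha ha0

lemma abs_add_abs_div_le_mul_add_sq {R a b : ℝ} (hR : 0 < R) (hc : 1 ≤ c)
    (ha : a ≠ 0 → 1 ≤ R * |a|) (hb : b ≠ 0 → 1 ≤ R * |b|) (hac : a ≠ 0 ∨ c = 1) :
    (|a| + |b|) / (2 * R) ≤ a * b + 2 * boostX c a b ^ 2 := by
  have hc0 : 0 < c := by linarith
  have hboost : a * b + 2 * boostX c a b ^ 2 = ((c * a) ^ 2 + (b / c) ^ 2) / 2 := by
    rw [boostX]
    field_simp
    ring
  rw [hboost]
  rcases eq_or_ne b 0 with rfl | hb0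
  · have hca : a ^ 2 ≤ (c * a) ^ 2 := by
      rw [mul_pow]
      exact le_mul_of_one_le_left (sq_nonneg a) (one_le_pow₀ hc)
    simpa using (abs_div_le_sq_div_two hR ha).trans (by linarith)
  rcases eq_or_ne a 0 with rfl | ha0
  · obtain rfl : c = 1 := by simpa using hac
    simpa using abs_div_le_sq_div_two hR hb
  · have hprod : |a * b| = |c * a| * |b / c| := by
      rw [← abs_mul]
      congr 1
      field_simp
    refine (abs_add_abs_div_le_abs_mul hR (ha ha0) (hb hb0)).trans ?_
    rw [hprod, ← sq_abs (c * a), ← sq_abs (b / c)]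
    linarith [two_mul_le_add_sq |c * a| |b / c|]

lemma norm_defect_le (hN : 0 < N) (hh : ∃ k : ℤ, h = (k : ℝ) / N) (hτ : 0 < τ.im) (hc : 1 ≤ c)
    {q : ℤ × ℤ} (hq : coneA N h q ≠ 0 ∨ c = 1) : ‖defect N h τ c q‖ ≤ defectBound N h τ.im q := by
  rw [defect, norm_mul, norm_indefTerm, norm_real, Real.norm_eq_abs, abs_sub_comm, defectBound]
  have hR : (0 : ℝ) < 2 * N := by positivity
  refine exp_mul_abs_abs_sub_smoothAbs_le hτ hc (fun hab ↦ ?_)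
    (abs_add_abs_div_le_mul_add_sq hR hc (one_le_mul_abs_coneA hN hh)
      (one_le_mul_abs_coneB hN hh) hq)
  rw [← abs_of_pos hab]
  exact abs_add_abs_div_le_abs_mul hR (one_le_mul_abs_coneA hN hh (left_ne_zero_of_mul hab.ne'))
    (one_le_mul_abs_coneB hN hh (right_ne_zero_of_mul hab.ne'))

lemma hasSum_defect_one (hN : 0 < N) (hh : ∃ k : ℤ, h = (k : ℝ) / N) (hτ : 0 < τ.im) :
    HasSum (defect N h τ 1) (2 * (I * eta3 τ) * ∑' n : ℤ, gfun τ ((N : ℝ) * n + h)) := by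
  have hsum : Summable (defect N h τ 1) := Summable.of_norm_bounded
    (summable_defectBound hN h hτ) fun q ↦ norm_defect_le hN hh hτ le_rfl (Or.inr rfl)
  rw [hsum.hasSum_iff, hsum.tsum_prod, ← tsum_mul_left]
  exact tsum_congr fun n ↦ (hasSum_smoothAbs_one_sub_abs hτ ((N : ℝ) * n + h)).tsum_eq

/-! ### The limit of large boosts -/

lemma norm_indicator_defect_le (hN : 0 < N) (hh : ∃ k : ℤ, h = (k : ℝ) / N) (hτ : 0 < τ.im)
    (hc : 1 ≤ c) (q : ℤ × ℤ) :
    ‖(isotropicLine N h)ᶜ.indicator (defect N h τ c) q‖ ≤ defectBound N h τ.im q := by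
  by_cases hq : q ∈ (isotropicLine N h)ᶜ
  · rw [Set.indicator_of_mem hq]
    exact norm_defect_le hN hh hτ hc (Or.inl hq)
  · rw [Set.indicator_of_notMem hq, norm_zero, defectBound]
    positivity

lemma summable_indicator_defect (hN : 0 < N) (hh : ∃ k : ℤ, h = (k : ℝ) / N) (hτ : 0 < τ.im)
    (hc : 1 ≤ c) : Summable ((isotropicLine N h)ᶜ.indicator (defect N h τ c)) :=
  .of_norm_bounded (summable_defectBound hN h hτ) (norm_indicator_defect_le hN hh hτ hc)

lemma tendsto_tsum_indicator_defect (hN : 0 < N) (hh : ∃ k : ℤ, h = (k : ℝ) / N)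
    (hτ : 0 < τ.im) :
    Tendsto (fun c ↦ ∑' q, (isotropicLine N h)ᶜ.indicator (defect N h τ c) q) atTop (𝓝 0) := by
  rw [← tsum_zero (β := ℤ × ℤ)]
  refine tendsto_tsum_of_dominated_convergence (summable_defectBound hN h hτ) (fun q ↦ ?_) ?_
  · by_cases hq : q ∈ (isotropicLine N h)ᶜ
    · have hlim : Tendsto (fun c ↦ smoothAbs τ.im c (coneA N h q) (coneB N h q) - |coneA N h q|)
          atTop (𝓝 0) := by
        rw [← sub_self |coneA N h q|]
        exact (tendsto_smoothAbs hτ hq _).sub_const _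
      simpa [Set.indicator_of_mem hq, defect] using
        ((continuous_ofReal.tendsto _).comp hlim).const_mul (indefTerm N h τ q)
    · simp only [Set.indicator_of_notMem hq, tendsto_const_nhds_iff]
  · filter_upwards [eventually_ge_atTop 1] with c hc q
    exact norm_indicator_defect_le hN hh hτ hc q

lemma tendsto_cosKernel_atTop (a : UnitAddCircle) :
    Tendsto (HurwitzZeta.cosKernel a) atTop (𝓝 1) := by
  obtain ⟨p, hp, hO⟩ := HurwitzZeta.isBigO_atTop_cosKernel_sub a
  have hexp : Tendsto (fun x : ℝ ↦ Real.exp (-p * x)) atTop (𝓝 0) :=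
    Real.tendsto_exp_atBot.comp (tendsto_id.const_mul_atTop_of_neg (by linarith))
  simpa using (hO.trans_tendsto hexp).add_const 1

lemma hasSum_gaussian_cosKernel (hN : 0 < N) (h : ℝ) {v : ℝ} (hv : 0 < v) (hc : 0 < c) :
    HasSum (fun n : ℤ ↦ 1 / c *
        (Real.exp (-2 * π * v * ((N * n + h) / c) ^ 2) / (π * √(2 * v))))
      (1 / (2 * π * v * N) *
        HurwitzZeta.cosKernel ((h / N : ℝ) : UnitAddCircle) (c ^ 2 / (2 * v * N ^ 2))) := by
  have hsum := (HurwitzZeta.hasSum_int_evenKernel (h / N)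
    (show 0 < 2 * v * N ^ 2 / c ^ 2 by positivity)).mul_left (1 / c / (π * √(2 * v)))
  have hsqrt : √(2 * v * N ^ 2 / c ^ 2) = √(2 * v) * N / c := by
    rw [Real.sqrt_div (by positivity), Real.sqrt_sq hc.le, Real.sqrt_mul (by positivity) (_ ^ 2),
      Real.sqrt_sq (by positivity)]
  rw [HurwitzZeta.evenKernel_functional_equation, ← Real.sqrt_eq_rpow, one_div_div, hsqrt] at hsum
  have hvalue : 1 / c / (π * √(2 * v)) * (1 / (√(2 * v) * N / c)) = 1 / (2 * π * v * N) := by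
    field_simp
    rw [Real.sq_sqrt (by positivity)]
  rw [← mul_assoc, hvalue] at hsum
  refine hsum.congr_fun fun n ↦ ?_
  have harg : -2 * π * v * ((N * n + h) / c) ^ 2
      = -π * (n + h / N) ^ 2 * (2 * v * N ^ 2 / c ^ 2) := by field_simp
  rw [harg]
  ring

/-- The boundary contribution `e(h/2)` of the isotropic line, which contains lattice points only
for `h ∈ ℤ + 1/2`. -/
noncomputable def halfIntPart (h : ℝ) : ℂ := if ∃ m : ℤ, h = (m : ℝ) + 1/2 then e (h / 2) else 0

lemma isotropicLine_add_half (N : ℕ) (k : ℤ) :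
    isotropicLine N ((k : ℝ) + 1/2) = Set.range fun n : ℤ ↦ (n, -1 - k - N * n) := by
  ext ⟨n, m⟩
  simp only [isotropicLine, coneA, Set.mem_ofPred_eq, Set.mem_range, Prod.mk.injEq,
    exists_eq_left]
  constructor
  · intro ha
    have hm : ((-1 - k - N * n : ℤ) : ℝ) = m := by
      push_cast
      linarith
    exact_mod_cast hm
  · rintro rfl
    push_cast
    ring

lemma isotropicLine_eq_empty (hh : ¬∃ m : ℤ, h = (m : ℝ) + 1/2) : isotropicLine N h = ∅ := by
  refine Set.eq_empty_of_forall_notMem fun q hq ↦ hh ⟨-1 - q.2 - N * q.1, ?_⟩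
  rw [isotropicLine, Set.mem_ofPred_eq, coneA] at hq
  push_cast
  linarith

lemma indefTerm_isotropic (hNe : Even N) (k : ℤ) (τ : ℂ) (n : ℤ) :
    indefTerm N ((k : ℝ) + 1/2) τ (n, -1 - k - N * n) = -e (((k : ℝ) + 1/2 : ℝ) / 2) := by
  obtain ⟨r, rfl⟩ := hNe
  have hsign : -e (((k : ℝ) + 1/2 : ℝ) / 2)
      = e (1 / 2 + ((-r * n - k - 1 : ℤ) : ℂ) + ((k : ℝ) + 1/2 : ℝ) / 2) := by
    rw [e_add, e_add, e_one_half, e_intCast]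
    ring
  rw [hsign, indefTerm, thetaCoeff, ← e_add]
  congr 1
  push_cast
  ring

lemma defect_isotropic (hNe : Even N) (k : ℤ) (τ : ℂ) (c : ℝ) (n : ℤ) :
    defect N ((k : ℝ) + 1/2) τ c (n, -1 - k - N * n) =
      -e (((k : ℝ) + 1/2 : ℝ) / 2) * (1 / c * (Real.exp
        (-2 * π * τ.im * ((N * n + ((k : ℝ) + 1/2)) / c) ^ 2) / (π * √(2 * τ.im))) : ℝ) := by
  have ha : coneA N ((k : ℝ) + 1/2) (n, -1 - k - N * n) = 0 := by
    rw [coneA]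
    push_cast
    ring
  have hX : boostX c 0 (coneB N ((k : ℝ) + 1/2) (n, -1 - k - N * n))
      = (N * n + ((k : ℝ) + 1/2)) / c := by
    rw [boostX, coneB]
    push_cast
    ring
  rw [defect, indefTerm_isotropic hNe, ha, smoothAbs, hX, abs_zero, zero_mul, zero_add, sub_zero]

lemma hasSum_indicator_defect_add_half (hN : 0 < N) (hNe : Even N) (k : ℤ) (hτ : 0 < τ.im)
    (hc : 0 < c) :
    HasSum ((isotropicLine N ((k : ℝ) + 1/2)).indicator (defect N ((k : ℝ) + 1/2) τ c))
      (-e (((k : ℝ) + 1/2 : ℝ) / 2) * (1 / (2 * π * τ.im * N) * HurwitzZeta.cosKernel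
        ((((k : ℝ) + 1/2) / N : ℝ) : UnitAddCircle) (c ^ 2 / (2 * τ.im * N ^ 2)) : ℝ)) := by
  have hinj : Function.Injective fun n : ℤ ↦ (n, -1 - k - N * n) :=
    fun _ _ hn ↦ congrArg Prod.fst hn
  rw [← hasSum_subtype_iff_indicator, isotropicLine_add_half]
  refine (hinj.hasSum_range_iff (f := defect N ((k : ℝ) + 1/2) τ c)).mpr ?_
  exact ((hasSum_ofReal.mpr (hasSum_gaussian_cosKernel hN _ hτ hc)).mul_left _).congr_fun fun n ↦
    defect_isotropic hNe k τ c n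

lemma exists_hasSum_indicator_defect (hN : 0 < N) (hNe : Even N) (h : ℝ) (hτ : 0 < τ.im) :
    ∃ S : ℝ → ℂ, (∀ c, 0 < c → HasSum ((isotropicLine N h).indicator (defect N h τ c)) (S c)) ∧
      Tendsto S atTop (𝓝 (-(halfIntPart h / (2 * π * τ.im * N)))) := by
  by_cases hh : ∃ m : ℤ, h = (m : ℝ) + 1/2
  · have hpart : halfIntPart h = e (h / 2) := if_pos hh
    obtain ⟨k, rfl⟩ := hh
    refine ⟨_, fun c hc ↦ hasSum_indicator_defect_add_half hN hNe k hτ hc, ?_⟩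
    have hlim := (tendsto_cosKernel_atTop ((((k : ℝ) + 1/2) / N : ℝ) : UnitAddCircle)).comp
      ((tendsto_pow_atTop two_ne_zero).atTop_div_const
        (show 0 < 2 * τ.im * N ^ 2 by positivity))
    have hvalue : -(halfIntPart ((k : ℝ) + 1/2) / (2 * π * τ.im * N))
        = -e (((k : ℝ) + 1/2 : ℝ) / 2) * (1 / (2 * π * τ.im * N) * 1 : ℝ) := by
      rw [hpart]
      push_cast
      ring
    rw [hvalue]
    exact ((continuous_ofReal.tendsto _).comp (hlim.const_mul _)).const_mul _
  · have hpart : halfIntPart h = 0 := if_neg hh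
    refine ⟨0, fun c _ ↦ ?_, ?_⟩
    · rw [isotropicLine_eq_empty hh, Set.indicator_empty]
      exact hasSum_zero
    · rw [hpart, zero_div, neg_zero]
      exact tendsto_const_nhds

/-- The change of the lattice sum of `defect` between the boost parameters `1` and `c`. -/
noncomputable def totalDefect (N : ℕ) (h : ℝ) (τ : ℂ) (c : ℝ) : ℂ :=
  ∑' q, (defect N h τ 1 q - defect N h τ c q)

lemma totalDefect_one (N : ℕ) (h : ℝ) (τ : ℂ) : totalDefect N h τ 1 = 0 := by
  simp [totalDefect]

/-- The limit `c → ∞` of `totalDefect N h τ c`: the sum of `g_τ` over `Nℤ + h`, cleared of the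
denominator `2iη³`, with the contribution of the isotropic line. -/
noncomputable def boostLimit (N : ℕ) (h : ℝ) (τ : ℂ) : ℂ :=
  2 * (I * eta3 τ) * ∑' n : ℤ, gfun τ ((N : ℝ) * n + h) + halfIntPart h / (2 * π * τ.im * N)

lemma tendsto_totalDefect (hN : 0 < N) (hNe : Even N) (hh : ∃ k : ℤ, h = (k : ℝ) / N)
    (hτ : 0 < τ.im) :
    Tendsto (totalDefect N h τ) atTop (𝓝 (boostLimit N h τ)) := by
  obtain ⟨S, hS, hSlim⟩ := exists_hasSum_indicator_defect hN hNe h hτ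
  have hlim := (hSlim.add (tendsto_tsum_indicator_defect hN hh hτ)).const_sub
    (2 * (I * eta3 τ) * ∑' n : ℤ, gfun τ ((N : ℝ) * n + h))
  rw [add_zero, sub_neg_eq_add, ← boostLimit] at hlim
  refine hlim.congr' ?_
  filter_upwards [eventually_ge_atTop 1] with c hc
  have hsplit := (hS c (by linarith)).add (summable_indicator_defect hN hh hτ hc).hasSum
  have hfun : (fun q ↦ (isotropicLine N h).indicator (defect N h τ c) q
      + (isotropicLine N h)ᶜ.indicator (defect N h τ c) q) = defect N h τ c :=
    Set.indicator_self_add_compl _ _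
  rw [hfun] at hsplit
  exact ((hasSum_defect_one hN hh hτ).sub hsplit).tsum_eq.symm

end Lattice

/-! ### Poisson summation for theta series of binary quadratic forms -/

/-- The symmetric matrix with rows `(P, R)` and `(R, U)` has positive definite real part, so that
the Gaussian of the binary quadratic form `P M² + 2 R M X + U X²` decays. -/
structure PosDefForm (P R U : ℂ) : Prop where
  re_pos : 0 < P.re
  det_pos : R.re ^ 2 < P.re * U.re

/-- The Gaussian `exp(-π(P M² + 2 R M X + U X²))` of a binary quadratic form. -/
noncomputable def quadGaussian (P R U M X : ℂ) : ℂ :=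
  cexp (-π * (P * M ^ 2 + 2 * R * M * X + U * X ^ 2))

/-- The theta series `∑ e(M/2) exp(-π(P M² + 2 R M X + U X²))` over `M ∈ ℤ + 1/2`, with `X`
fixed. -/
noncomputable def fiberTheta (P R U X : ℂ) : ℂ :=
  ∑' m : ℤ, e (((m : ℂ) + 1/2) / 2) * quadGaussian P R U ((m : ℂ) + 1/2) X

/-- The theta series `∑ e(M/2) exp(-π(P M² + 2 R M X + U X²))` over `M ∈ ℤ + 1/2` and
`X ∈ Nℤ + h`. -/
noncomputable def quadTheta (N : ℕ) (h : ℝ) (P R U : ℂ) : ℂ :=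
  ∑' n : ℤ, fiberTheta P R U ((N : ℝ) * n + h : ℝ)

/-- The finite Fourier transform `∑_j e(hj/N) F(j/N)` over `(1/N)ℤ / Nℤ` that occurs in the Weil
representation of the lattice `Nℤ`. -/
noncomputable def weilSum (N : ℕ) (h : ℝ) (F : ℝ → ℂ) : ℂ :=
  ∑ j ∈ Finset.range (N ^ 2), e ((h * j / N : ℝ) : ℂ) * F ((j : ℝ) / N)

lemma re_one_div_pos {z : ℂ} (hz : 0 < z.re) : 0 < (1 / z).re := by
  rw [one_div, Complex.inv_re]
  exact div_pos hz (normSq_pos.mpr (ne_zero_of_re_pos hz))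

lemma norm_e_ofReal (x : ℝ) : ‖e x‖ = 1 := by simp [norm_e]

lemma norm_e_half_int_div_two (m : ℤ) : ‖e (((m : ℂ) + 1/2) / 2)‖ = 1 := by
  simpa using norm_e_ofReal (((m : ℝ) + 1/2) / 2)

lemma e_one_quarter : e (1 / 4) = I := by
  rw [e, show 2 * (π : ℂ) * I * (1 / 4) = π / 2 * I by ring, Complex.exp_pi_div_two_mul_I]

lemma e_half_int_div_two_neg (m : ℤ) :
    e (-((m : ℂ) + 1/2) / 2) = -e (((m : ℂ) + 1/2) / 2) := by
  have harg : ((m : ℂ) + 1/2) / 2 = -((m : ℂ) + 1/2) / 2 + (1 / 2 + m) := by ring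
  rw [harg, e_add, e_add, e_intCast, e_one_half]
  ring

lemma norm_quadGaussian (P R U : ℂ) (M X : ℝ) :
    ‖quadGaussian P R U M X‖
      = Real.exp (-π * (P.re * M ^ 2 + 2 * R.re * M * X + U.re * X ^ 2)) := by
  rw [quadGaussian, Complex.norm_exp]
  congr 1
  have harg : -(π : ℂ) * (P * (M : ℂ) ^ 2 + 2 * R * M * X + U * (X : ℂ) ^ 2)
      = (-π * M ^ 2 : ℝ) * P + (-π * (2 * M * X) : ℝ) * R + (-π * X ^ 2 : ℝ) * U := by
    push_cast
    ring
  rw [harg, Complex.add_re, Complex.add_re, Complex.re_ofReal_mul, Complex.re_ofReal_mul,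
    Complex.re_ofReal_mul]
  ring

lemma summable_exp_neg_mul_sq_int {ε α : ℝ} (hε : 0 < ε) (hα : α ≠ 0) (β : ℝ) :
    Summable (fun n : ℤ ↦ Real.exp (-ε * (α * n + β) ^ 2)) := by
  refine Summable.of_nonneg_of_le (fun _ ↦ (Real.exp_pos _).le) (fun n ↦ ?_)
    ((summable_exp_neg_mul_abs_int hε hα β).mul_left (Real.exp ε))
  have habs : |α * n + β| ≤ (α * n + β) ^ 2 + 1 := by
    rw [← sq_abs]
    nlinarith [sq_nonneg (|α * n + β| - 1), abs_nonneg (α * n + β)]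
  rw [← Real.exp_add, Real.exp_le_exp]
  nlinarith

lemma summable_exp_neg_mul_sq_add_sq {ε α : ℝ} (hε : 0 < ε) (hα : α ≠ 0) (β : ℝ) :
    Summable (fun q : ℤ × ℤ ↦
      Real.exp (-ε * ((α * q.1 + β) ^ 2 + ((q.2 : ℝ) + 1/2) ^ 2))) := by
  refine ((summable_exp_neg_mul_sq_int hε hα β).mul_of_nonneg
    (summable_exp_neg_mul_sq_int hε one_ne_zero (1/2))
    (fun _ ↦ (Real.exp_pos _).le) (fun _ ↦ (Real.exp_pos _).le)).congr fun q ↦ ?_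
  rw [← Real.exp_add]
  ring_nf

namespace PosDefForm

variable {P R U : ℂ}

lemma re_pos_right (hQ : PosDefForm P R U) : 0 < U.re :=
  pos_of_mul_pos_right ((sq_nonneg _).trans_lt hQ.det_pos) hQ.re_pos.le

lemma swap (hQ : PosDefForm P R U) : PosDefForm U R P :=
  ⟨hQ.re_pos_right, by linarith [hQ.det_pos]⟩

lemma neg (hQ : PosDefForm P R U) : PosDefForm P (-R) U :=
  ⟨hQ.re_pos, by simpa using hQ.det_pos⟩

lemma partialDual (hQ : PosDefForm P R U) : PosDefForm (1 / P) (I * R / P) (U - R ^ 2 / P) := by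
  refine ⟨re_one_div_pos hQ.re_pos, ?_⟩
  have hn : 0 < normSq P := normSq_pos.mpr (ne_zero_of_re_pos hQ.re_pos)
  have hdet : (1 / P).re * (U - R ^ 2 / P).re - (I * R / P).re ^ 2
      = (P.re * U.re - R.re ^ 2) / normSq P := by
    simp only [Complex.sub_re, Complex.div_re, Complex.mul_re, Complex.mul_im, Complex.I_re,
      Complex.I_im, Complex.one_re, Complex.one_im, sq]
    field_simp
    rw [normSq_apply]
    ring
  linarith [div_pos (sub_pos.mpr hQ.det_pos) hn]

lemma exists_mul_le (hQ : PosDefForm P R U) : ∃ ε > 0, ∀ M X : ℝ,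
    ε * (X ^ 2 + M ^ 2) ≤ P.re * M ^ 2 + 2 * R.re * M * X + U.re * X ^ 2 := by
  have hP := hQ.re_pos
  have hU := hQ.re_pos_right
  -- `ε = det / trace` makes the determinant of the difference of the two forms equal to `ε²`
  set ε := (P.re * U.re - R.re ^ 2) / (P.re + U.re) with hε
  have hεeq : ε * (P.re + U.re) = P.re * U.re - R.re ^ 2 := by
    rw [hε]
    field_simp
  have hdiff : 0 < P.re - ε := by
    have hmul : (P.re - ε) * (P.re + U.re) = P.re ^ 2 + R.re ^ 2 := by linear_combination -hεeq
    have hpos : 0 < (P.re - ε) * (P.re + U.re) := by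
      rw [hmul]
      positivity
    exact pos_of_mul_pos_left hpos (by positivity)
  refine ⟨ε, div_pos (sub_pos.mpr hQ.det_pos) (by positivity), fun M X ↦ ?_⟩
  have hsq : (P.re - ε) * (P.re * M ^ 2 + 2 * R.re * M * X + U.re * X ^ 2 - ε * (X ^ 2 + M ^ 2))
      = ((P.re - ε) * M + R.re * X) ^ 2 + (ε * X) ^ 2 := by
    linear_combination -X ^ 2 * hεeq
  exact sub_nonneg.mp (nonneg_of_mul_nonneg_right (hsq ▸ by positivity) hdiff)

lemma summable (hQ : PosDefForm P R U) {α : ℝ} (hα : α ≠ 0) (β : ℝ) :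
    Summable (fun q : ℤ × ℤ ↦ e (((q.2 : ℂ) + 1/2) / 2) *
      quadGaussian P R U ((q.2 : ℂ) + 1/2) ((α * q.1 + β : ℝ) : ℂ)) := by
  obtain ⟨ε, hε, hle⟩ := hQ.exists_mul_le
  refine Summable.of_norm_bounded
    (summable_exp_neg_mul_sq_add_sq (mul_pos Real.pi_pos hε) hα β) fun q ↦ ?_
  have hcast : (q.2 : ℂ) + 1/2 = (((q.2 : ℝ) + 1/2 : ℝ) : ℂ) := by push_cast; rfl
  rw [norm_mul, norm_e_half_int_div_two, one_mul, hcast, norm_quadGaussian, Real.exp_le_exp]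
  linarith [mul_le_mul_of_nonneg_left (hle ((q.2 : ℝ) + 1/2) (α * q.1 + β)) Real.pi_pos.le]

end PosDefForm

lemma mul_cpow_of_re_pos {z w : ℂ} (hz : 0 < z.re) (hw : 0 < w.re) (s : ℂ) :
    (z * w) ^ s = z ^ s * w ^ s := by
  have hz0 := ne_zero_of_re_pos hz
  have hw0 := ne_zero_of_re_pos hw
  have harg_z := abs_lt.mp (Complex.abs_arg_lt_pi_div_two_iff.mpr (Or.inl hz))
  have harg_w := abs_lt.mp (Complex.abs_arg_lt_pi_div_two_iff.mpr (Or.inl hw))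
  have hlog : Complex.log (z * w) = Complex.log z + Complex.log w :=
    Complex.log_mul hz0 hw0 ⟨by linarith, by linarith⟩
  rw [cpow_def_of_ne_zero (mul_ne_zero hz0 hw0), cpow_def_of_ne_zero hz0, cpow_def_of_ne_zero hw0,
    hlog, add_mul, Complex.exp_add]

lemma tsum_quadGaussian_mul_add {P R U : ℂ} (hU : 0 < U.re) {N : ℕ} (hN : 0 < N) (h : ℝ) (M : ℂ) :
    ∑' n : ℤ, quadGaussian P R U M (((N : ℝ) * n + h : ℝ) : ℂ)
      = 1 / (N * U ^ (1/2 : ℂ)) * ∑' l : ℤ, e ((h * (l / N) : ℝ) : ℂ) *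
        quadGaussian (P - R ^ 2 / U) (-(I * R / U)) (1 / U) M ((l / N : ℝ) : ℂ) := by
  have hU0 := ne_zero_of_re_pos hU
  have hN0 : (N : ℂ) ≠ 0 := by exact_mod_cast hN.ne'
  have hUN : 0 < (((N ^ 2 : ℝ) : ℂ) * U).re := by
    rw [Complex.re_ofReal_mul]
    positivity
  have hsqrt : (((N ^ 2 : ℝ) : ℂ) * U) ^ (1/2 : ℂ) = N * U ^ (1/2 : ℂ) := by
    rw [mul_cpow_of_re_pos (by rw [ofReal_re]; positivity) hU, ofReal_pow, ofReal_natCast, one_div,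
      sq_cpow_two_inv (by rw [natCast_re]; positivity)]
  have hpoisson := Complex.tsum_exp_neg_quadratic hUN (N * (-R * M - U * h))
  rw [hsqrt] at hpoisson
  set C := -π * (P * M ^ 2 + 2 * R * M * h + U * h ^ 2) with hC
  have hleft : ∀ n : ℤ, quadGaussian P R U M (((N : ℝ) * n + h : ℝ) : ℂ) = cexp C *
      cexp (-π * (((N ^ 2 : ℝ) : ℂ) * U) * (n : ℂ) ^ 2
        + 2 * π * (N * (-R * M - U * h)) * n) := fun n ↦ by
    rw [quadGaussian, ← Complex.exp_add, hC]
    push_cast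
    ring_nf
  have hright : ∀ l : ℤ, cexp C * cexp (-π / (((N ^ 2 : ℝ) : ℂ) * U) *
      ((l : ℂ) + I * (N * (-R * M - U * h))) ^ 2) = e ((h * (l / N) : ℝ) : ℂ) *
        quadGaussian (P - R ^ 2 / U) (-(I * R / U)) (1 / U) M
          ((l / N : ℝ) : ℂ) := fun l ↦ by
    rw [e, quadGaussian, ← Complex.exp_add, ← Complex.exp_add, hC]
    congr 1
    push_cast
    field_simp
    linear_combination (-N ^ 2 * (R * M + U * h) ^ 2) * I_sq
  simp_rw [hleft, tsum_mul_left, hpoisson, mul_left_comm (cexp C), ← tsum_mul_left, hright]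

lemma fiberTheta_eq {P : ℂ} (hP : 0 < P.re) (R U X : ℂ) :
    fiberTheta P R U X
      = -I / P ^ (1/2 : ℂ) * fiberTheta (1 / P) (I * R / P) (U - R ^ 2 / P) X := by
  have hP0 := ne_zero_of_re_pos hP
  have hpoisson := Complex.tsum_exp_neg_quadratic hP (-P/2 - R * X + I / 2)
  rw [← (Equiv.neg ℤ).tsum_eq (fun n : ℤ ↦
    cexp (-π / P * ((n : ℂ) + I * (-P/2 - R * X + I / 2)) ^ 2))] at hpoisson
  set C := -π * P / 4 - π * R * X + π * I / 2 - π * U * X ^ 2 with hC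
  have hleft : ∀ m : ℤ, e (((m : ℂ) + 1/2) / 2) * quadGaussian P R U ((m : ℂ) + 1/2) X
      = cexp C * cexp (-π * P * (m : ℂ) ^ 2 + 2 * π * (-P/2 - R * X + I / 2) * m) := fun m ↦ by
    rw [e, quadGaussian, ← Complex.exp_add, ← Complex.exp_add, hC]
    ring_nf
  have hright : ∀ m : ℤ, cexp C * cexp (-π / P *
        (((Equiv.neg ℤ m : ℤ) : ℂ) + I * (-P/2 - R * X + I / 2)) ^ 2)
      = -I * (e (((m : ℂ) + 1/2) / 2) *
        quadGaussian (1 / P) (I * R / P) (U - R ^ 2 / P) ((m : ℂ) + 1/2) X) := fun m ↦ by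
    have hsign : -I * (e (((m : ℂ) + 1/2) / 2) *
        quadGaussian (1 / P) (I * R / P) (U - R ^ 2 / P) ((m : ℂ) + 1/2) X)
        = e (1 / 4) * (e (-((m : ℂ) + 1/2) / 2) *
          quadGaussian (1 / P) (I * R / P) (U - R ^ 2 / P) ((m : ℂ) + 1/2) X) := by
      rw [e_half_int_div_two_neg, e_one_quarter]
      ring
    rw [hsign, e, e, quadGaussian, ← Complex.exp_add, ← Complex.exp_add, ← Complex.exp_add, hC,
      Equiv.neg_apply]
    congr 1
    push_cast
    field_simp
    ring_nf
    simp only [I_sq, I_pow_three, I_pow_four]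
    ring
  simp_rw [fiberTheta, hleft, tsum_mul_left, hpoisson, mul_left_comm (cexp C), ← tsum_mul_left,
    hright, tsum_mul_left]
  ring

lemma tsum_int_div_eq_sum_range {N : ℕ} (hN : 0 < N) {g : ℝ → ℂ}
    (hg : Summable fun l : ℤ ↦ g (l / N)) :
    ∑' l : ℤ, g (l / N)
      = ∑ j ∈ Finset.range (N ^ 2), ∑' n : ℤ, g ((N : ℝ) * n + (j : ℝ) / N) := by
  have : NeZero (N ^ 2) := ⟨by positivity⟩
  let residue : Fin (N ^ 2) × ℤ ≃ ℤ :=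
    (Equiv.prodComm _ _).trans (Int.divModEquiv (N ^ 2)).symm
  have hval : ∀ p, ((residue p : ℝ) / N) = (N : ℝ) * p.2 + ((p.1 : ℕ) : ℝ) / N := fun p ↦ by
    have : (N : ℝ) ≠ 0 := by exact_mod_cast hN.ne'
    simp only [residue, Equiv.trans_apply, Equiv.prodComm_apply, Int.divModEquiv_symm_apply,
      Prod.fst_swap, Prod.snd_swap]
    push_cast
    field_simp
  have hsum : Summable fun p ↦ g (residue p / N) := residue.summable_iff.mpr hg
  rw [← residue.tsum_eq, hsum.tsum_prod, tsum_fintype, Finset.sum_range]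
  simp_rw [hval]

lemma quadTheta_eq_partialDual (N : ℕ) (h : ℝ) {P : ℂ} (hP : 0 < P.re) (R U : ℂ) :
    quadTheta N h P R U
      = -I / P ^ (1/2 : ℂ) * quadTheta N h (1 / P) (I * R / P) (U - R ^ 2 / P) := by
  simp_rw [quadTheta, fiberTheta_eq hP, tsum_mul_left]

lemma PosDefForm.summable_e_mul (h : ℝ) {P R U : ℂ} (hQ : PosDefForm P R U) {N : ℕ}
    (hN : 0 < N) :
    Summable (Function.uncurry fun l m : ℤ ↦ e ((h * (l / N) : ℝ) : ℂ) *
      (e (((m : ℂ) + 1/2) / 2) *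
        quadGaussian P R U ((m : ℂ) + 1/2) ((l / N : ℝ) : ℂ))) := by
  have hN0 : (N : ℝ)⁻¹ ≠ 0 := by positivity
  refine ((hQ.summable hN0 0).norm.congr fun q ↦ ?_).of_norm
  rw [Function.uncurry, norm_mul (e ((h * (q.1 / N) : ℝ) : ℂ)), norm_e_ofReal, one_mul, add_zero,
    inv_mul_eq_div]

lemma PosDefForm.quadTheta_eq_tsum_fiberTheta {P R U : ℂ} (hQ : PosDefForm P R U) {N : ℕ}
    (hN : 0 < N) (h : ℝ) :
    quadTheta N h P R U = 1 / (N * U ^ (1/2 : ℂ)) * ∑' l : ℤ, e ((h * (l / N) : ℝ) : ℂ) *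
      fiberTheta (P - R ^ 2 / U) (-(I * R / U)) (1 / U) ((l / N : ℝ) : ℂ) := by
  have hN0 : (N : ℝ) ≠ 0 := by positivity
  simp only [quadTheta, fiberTheta]
  rw [← (hQ.summable hN0 h).tsum_comm]
  simp_rw [tsum_mul_left, tsum_quadGaussian_mul_add hQ.re_pos_right hN h, ← tsum_mul_left,
    mul_left_comm (e (_ / 2)), tsum_mul_left]
  rw [(hQ.swap.partialDual.neg.swap.summable_e_mul h hN).tsum_comm]
  simp_rw [tsum_mul_left]

lemma PosDefForm.quadTheta_eq_weilSum {P R U : ℂ} (hQ : PosDefForm P R U) {N : ℕ} (hN : 0 < N)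
    {h : ℝ} (hh : ∃ k : ℤ, h = (k : ℝ) / N) :
    quadTheta N h P R U = 1 / (N * U ^ (1/2 : ℂ)) *
      weilSum N h fun h' ↦ quadTheta N h' (P - R ^ 2 / U) (-(I * R / U)) (1 / U) := by
  obtain ⟨k, rfl⟩ := hh
  have hN0 : (N : ℂ) ≠ 0 := by exact_mod_cast hN.ne'
  have hperiod : ∀ (n : ℤ) (j : ℕ), e (((k : ℝ) / N * ((N : ℝ) * n + (j : ℝ) / N) : ℝ) : ℂ)
      = e (((k : ℝ) / N * j / N : ℝ) : ℂ) := fun n j ↦ by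
    rw [← mul_one (e (((k : ℝ) / N * j / N : ℝ) : ℂ)), ← e_intCast (k * n), ← e_add]
    congr 1
    push_cast
    field_simp
    ring
  have hsum := (hQ.swap.partialDual.neg.swap.summable_e_mul (k / N) hN).prod
  simp only [Function.uncurry_apply_pair, tsum_mul_left] at hsum
  rw [hQ.quadTheta_eq_tsum_fiberTheta hN, tsum_int_div_eq_sum_range hN
    (g := fun x ↦ e (((k : ℝ) / N * x : ℝ) : ℂ) *
      fiberTheta (P - R ^ 2 / U) (-(I * R / U)) (1 / U) x) hsum]
  simp_rw [hperiod, tsum_mul_left, weilSum, quadTheta]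

lemma PosDefForm.quadTheta_eq_dual {P R U : ℂ} (hQ : PosDefForm P R U) {N : ℕ} (hN : 0 < N)
    {h : ℝ} (hh : ∃ k : ℤ, h = (k : ℝ) / N) {D : ℂ} (hD : P * U - R ^ 2 = D) :
    quadTheta N h P R U = -I / (N * D ^ (1/2 : ℂ)) *
      weilSum N h fun h' ↦ quadTheta N h' (U / D) (R / D) (P / D) := by
  have hP0 := ne_zero_of_re_pos hQ.re_pos
  have hsub : U - R ^ 2 / P = D / P := by
    rw [← hD]
    field_simp
  have hre : 0 < (D / P).re := hsub ▸ hQ.partialDual.re_pos_right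
  have hD0 : D ≠ 0 := fun hD0 ↦ ne_zero_of_re_pos hre (by rw [hD0, zero_div])
  have hsqrt : D ^ (1/2 : ℂ) = P ^ (1/2 : ℂ) * (D / P) ^ (1/2 : ℂ) := by
    rw [← mul_cpow_of_re_pos hQ.re_pos hre, mul_div_cancel₀ _ hP0]
  have hPP : 1 / P - (I * R / P) ^ 2 / (D / P) = U / D := by
    field_simp
    linear_combination -hD - R ^ 2 * I_sq
  have hRR : -(I * (I * R / P) / (D / P)) = R / D := by
    field_simp
    linear_combination -R * I_sq
  rw [quadTheta_eq_partialDual N h hQ.re_pos, hQ.partialDual.quadTheta_eq_weilSum hN hh, hsub,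
    hPP, hRR, one_div_div, hsqrt]
  field_simp

/-! ### The boosted Gaussian theta series -/

/-- The coefficient of `M²` in `μ M_c² + ν X_c²`, where `(M_c, X_c)` is the hyperbolic rotation of
`(M, X)` with `cosh = (c + 1/c)/2` and `sinh = (c - 1/c)/2`; exchanging `μ` and `ν` gives the
coefficient of `X²`. -/
noncomputable def boostDiag (c : ℝ) (μ ν : ℂ) : ℂ :=
  μ * (((c + 1 / c) / 2 : ℝ) : ℂ) ^ 2 + ν * (((c - 1 / c) / 2 : ℝ) : ℂ) ^ 2

/-- Half the coefficient of `M X` in `μ M_c² + ν X_c²`. -/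
noncomputable def boostCross (c : ℝ) (μ ν : ℂ) : ℂ :=
  (μ + ν) * (((c + 1 / c) / 2 * ((c - 1 / c) / 2) : ℝ) : ℂ)

/-- The summand `e(M/2) exp(-π(μ M_c² + ν X_c²))` at the lattice point `q`. -/
noncomputable def boostTerm (N : ℕ) (h c : ℝ) (μ ν : ℂ) (q : ℤ × ℤ) : ℂ :=
  e (((q.2 : ℂ) + 1/2) / 2) *
    cexp (-π * (μ * (boostM c (coneA N h q) (coneB N h q) : ℂ) ^ 2 +
      ν * (boostX c (coneA N h q) (coneB N h q) : ℂ) ^ 2))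

/-- The theta series `∑ e(M/2) exp(-π(μ M_c² + ν X_c²))`. -/
noncomputable def boostTheta (N : ℕ) (h c : ℝ) (μ ν : ℂ) : ℂ :=
  ∑' q, boostTerm N h c μ ν q

/-- The theta series `∑ M_c² e(M/2) exp(-π(μ M_c² + ν X_c²))`. -/
noncomputable def boostThetaSq (N : ℕ) (h c : ℝ) (μ ν : ℂ) : ℂ :=
  ∑' q, (boostM c (coneA N h q) (coneB N h q) : ℂ) ^ 2 * boostTerm N h c μ ν q

lemma boostDiag_mul_sub_sq {c : ℝ} (hc : c ≠ 0) (μ ν : ℂ) :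
    boostDiag c μ ν * boostDiag c ν μ - boostCross c μ ν ^ 2 = μ * ν := by
  have hc0 : (c : ℂ) ≠ 0 := by exact_mod_cast hc
  rw [boostDiag, boostDiag, boostCross]
  push_cast
  field_simp
  ring

lemma boostDiag_swap_div (c : ℝ) {μ ν : ℂ} (hμ : μ ≠ 0) (hν : ν ≠ 0) :
    boostDiag c ν μ / (μ * ν) = boostDiag c (1 / μ) (1 / ν) := by
  rw [boostDiag, boostDiag]
  field_simp

lemma boostCross_div (c : ℝ) {μ ν : ℂ} (hμ : μ ≠ 0) (hν : ν ≠ 0) :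
    boostCross c μ ν / (μ * ν) = boostCross c (1 / μ) (1 / ν) := by
  rw [boostCross, boostCross]
  field_simp
  ring

lemma posDefForm_boost {c : ℝ} (hc : 0 < c) {μ ν : ℂ} (hμ : 0 < μ.re) (hν : 0 < ν.re) :
    PosDefForm (boostDiag c μ ν) (boostCross c μ ν) (boostDiag c ν μ) := by
  have hre : ∀ z w : ℂ, (boostDiag c z w).re
      = z.re * ((c + 1 / c) / 2) ^ 2 + w.re * ((c - 1 / c) / 2) ^ 2 := fun z w ↦ by
    rw [boostDiag, ← ofReal_pow, ← ofReal_pow, add_re, re_mul_ofReal, re_mul_ofReal]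
  refine ⟨by rw [hre]; positivity, ?_⟩
  have hdet : (boostDiag c μ ν).re * (boostDiag c ν μ).re - (boostCross c μ ν).re ^ 2
      = μ.re * ν.re := by
    rw [hre, hre, boostCross, re_mul_ofReal, add_re]
    field_simp
    ring
  exact sub_pos.mp (hdet ▸ mul_pos hμ hν)

lemma boostTerm_eq (N : ℕ) (h c : ℝ) (μ ν : ℂ) (q : ℤ × ℤ) :
    boostTerm N h c μ ν q = e (((q.2 : ℂ) + 1/2) / 2) *
      quadGaussian (boostDiag c μ ν) (boostCross c μ ν) (boostDiag c ν μ)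
        ((q.2 : ℂ) + 1/2) (((N : ℝ) * q.1 + h : ℝ) : ℂ) := by
  rw [boostTerm, quadGaussian, boostDiag, boostDiag, boostCross, boostM, boostX, coneA, coneB]
  congr 3
  push_cast
  ring

lemma summable_boostTerm {N : ℕ} (hN : 0 < N) (h : ℝ) {c : ℝ} (hc : 0 < c) {μ ν : ℂ}
    (hμ : 0 < μ.re) (hν : 0 < ν.re) : Summable (boostTerm N h c μ ν) :=
  ((posDefForm_boost hc hμ hν).summable (by positivity : (N : ℝ) ≠ 0) h).congr fun q ↦
    (boostTerm_eq N h c μ ν q).symm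

lemma boostTheta_eq_quadTheta {N : ℕ} (hN : 0 < N) (h : ℝ) {c : ℝ} (hc : 0 < c) {μ ν : ℂ}
    (hμ : 0 < μ.re) (hν : 0 < ν.re) :
    boostTheta N h c μ ν
      = quadTheta N h (boostDiag c μ ν) (boostCross c μ ν) (boostDiag c ν μ) := by
  rw [boostTheta, (summable_boostTerm hN h hc hμ hν).tsum_prod]
  simp_rw [boostTerm_eq, quadTheta, fiberTheta]

lemma boostTheta_eq_dual {N : ℕ} (hN : 0 < N) {h : ℝ} (hh : ∃ k : ℤ, h = (k : ℝ) / N) {c : ℝ}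
    (hc : 0 < c) {μ ν : ℂ} (hμ : 0 < μ.re) (hν : 0 < ν.re) :
    boostTheta N h c μ ν = -I / (N * (μ * ν) ^ (1/2 : ℂ)) *
      weilSum N h fun h' ↦ boostTheta N h' c (1 / μ) (1 / ν) := by
  have hμ0 := ne_zero_of_re_pos hμ
  have hν0 := ne_zero_of_re_pos hν
  simp_rw [boostTheta_eq_quadTheta hN _ hc (re_one_div_pos hμ) (re_one_div_pos hν)]
  rw [boostTheta_eq_quadTheta hN h hc hμ hν,
    (posDefForm_boost hc hμ hν).quadTheta_eq_dual hN hh (boostDiag_mul_sub_sq hc.ne' μ ν),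
    boostDiag_swap_div c hμ0 hν0, boostCross_div c hμ0 hν0, mul_comm μ ν,
    boostDiag_swap_div c hν0 hμ0]

lemma norm_boostTerm (N : ℕ) (h c : ℝ) (μ ν : ℂ) (q : ℤ × ℤ) :
    ‖boostTerm N h c μ ν q‖
      = Real.exp (-π * (μ.re * boostM c (coneA N h q) (coneB N h q) ^ 2 +
          ν.re * boostX c (coneA N h q) (coneB N h q) ^ 2)) := by
  rw [boostTerm, norm_mul, norm_e_half_int_div_two, one_mul, Complex.norm_exp, ← ofReal_pow,
    ← ofReal_pow, ← ofReal_neg, re_ofReal_mul, add_re, re_mul_ofReal, re_mul_ofReal]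

/-- The exponent `X² + M²` at the lattice point `q`. -/
noncomputable def latticeSq (N : ℕ) (h : ℝ) (q : ℤ × ℤ) : ℝ :=
  ((N : ℝ) * q.1 + h) ^ 2 + ((q.2 : ℝ) + 1/2) ^ 2

lemma summable_exp_neg_mul_latticeSq {N : ℕ} (hN : 0 < N) (h : ℝ) {ε : ℝ} (hε : 0 < ε) :
    Summable fun q ↦ Real.exp (-ε * latticeSq N h q) :=
  summable_exp_neg_mul_sq_add_sq hε (by positivity) h

lemma latticeSq_div_sq_le (N : ℕ) (h : ℝ) {C c : ℝ} (hC : 0 < C) (hc : c ∈ Set.Icc (1 / C) C)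
    (q : ℤ × ℤ) :
    latticeSq N h q / C ^ 2 ≤
      boostM c (coneA N h q) (coneB N h q) ^ 2 + boostX c (coneA N h q) (coneB N h q) ^ 2 := by
  have hc0 : 0 < c := (one_div_pos.mpr hC).trans_le hc.1
  have hle : (1 / C) ^ 2 ≤ c ^ 2 := by gcongr; exact hc.1
  have hle' : (1 / C) ^ 2 ≤ (1 / c) ^ 2 := by gcongr; exact hc.2
  calc latticeSq N h q / C ^ 2
      = ((1 / C) ^ 2 * coneA N h q ^ 2 + (1 / C) ^ 2 * coneB N h q ^ 2) / 2 := by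
        rw [latticeSq, coneA, coneB]
        field_simp
        ring
    _ ≤ (c ^ 2 * coneA N h q ^ 2 + (1 / c) ^ 2 * coneB N h q ^ 2) / 2 := by gcongr
    _ = _ := by
        rw [boostM, boostX]
        field_simp
        ring

lemma norm_boostTerm_le (N : ℕ) (h : ℝ) {C c ρ : ℝ} (hC : 0 < C) (hc : c ∈ Set.Icc (1 / C) C)
    (hρ : 0 < ρ) {μ ν : ℂ} (hμ : ρ ≤ μ.re) (hν : ρ ≤ ν.re) (q : ℤ × ℤ) :
    ‖boostTerm N h c μ ν q‖ ≤ Real.exp (-(π * ρ / C ^ 2) * latticeSq N h q) := by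
  rw [norm_boostTerm, Real.exp_le_exp, neg_mul, neg_mul, neg_le_neg_iff]
  calc π * ρ / C ^ 2 * latticeSq N h q = π * (ρ * (latticeSq N h q / C ^ 2)) := by ring
    _ ≤ π * (ρ * (boostM c (coneA N h q) (coneB N h q) ^ 2 +
        boostX c (coneA N h q) (coneB N h q) ^ 2)) := by
        gcongr
        exact latticeSq_div_sq_le N h hC hc q
    _ ≤ _ := by
        rw [mul_add]
        gcongr

/-- Half of the Gaussian decay absorbs the polynomial factor. -/
lemma norm_sq_mul_boostTerm_le (N : ℕ) (h : ℝ) {C c ρ : ℝ} (hC : 0 < C)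
    (hc : c ∈ Set.Icc (1 / C) C) (hρ : 0 < ρ) {μ ν : ℂ} (hμ : ρ ≤ μ.re) (hν : ρ ≤ ν.re)
    (q : ℤ × ℤ) :
    ‖(boostM c (coneA N h q) (coneB N h q) : ℂ) ^ 2 * boostTerm N h c μ ν q‖
      ≤ 2 / (π * ρ) * Real.exp (-(π * (ρ / 2) / C ^ 2) * latticeSq N h q) := by
  set x := boostM c (coneA N h q) (coneB N h q) with hx
  have hsplit : ‖boostTerm N h c μ ν q‖
      = Real.exp (-π * (ρ / 2) * x ^ 2) *
        ‖boostTerm N h c (μ - (ρ / 2 : ℝ)) ν q‖ := by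
    rw [norm_boostTerm, norm_boostTerm, ← Real.exp_add, sub_re, ofReal_re, ← hx]
    ring_nf
  have habsorb : x ^ 2 * Real.exp (-π * (ρ / 2) * x ^ 2) ≤ 2 / (π * ρ) := by
    set t := π * (ρ / 2) * x ^ 2 with ht
    have hexp : t * Real.exp (-t) ≤ 1 := by
      rw [Real.exp_neg, ← div_eq_mul_inv, div_le_one (Real.exp_pos t)]
      linarith [Real.add_one_le_exp t]
    calc x ^ 2 * Real.exp (-π * (ρ / 2) * x ^ 2) = 2 / (π * ρ) * (t * Real.exp (-t)) := by
          rw [ht]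
          field_simp
      _ ≤ 2 / (π * ρ) * 1 := by gcongr
      _ = _ := mul_one _
  rw [norm_mul, ← ofReal_pow, norm_real, Real.norm_of_nonneg (sq_nonneg x), hsplit, ← mul_assoc]
  gcongr
  refine norm_boostTerm_le N h hC hc (half_pos hρ) ?_ (by linarith) q
  rw [sub_re, ofReal_re]
  linarith

lemma mem_Icc_max_one_div {c : ℝ} (hc : 0 < c) :
    c ∈ Set.Icc (1 / max c (1 / c)) (max c (1 / c)) := by
  refine ⟨?_, le_max_left _ _⟩
  rw [one_div_le (lt_max_of_lt_left hc) hc]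
  exact le_max_right _ _

lemma hasDerivAt_boostTheta {N : ℕ} (hN : 0 < N) (h : ℝ) {c : ℝ} (hc : 0 < c) {μ ν : ℂ}
    (hμ : 0 < μ.re) (hν : 0 < ν.re) :
    HasDerivAt (fun z ↦ boostTheta N h c z ν) (-π * boostThetaSq N h c μ ν) μ := by
  have hcC := mem_Icc_max_one_div hc
  set C := max c (1 / c)
  have hC : 0 < C := lt_max_of_lt_left hc
  set ρ := min (μ.re / 2) ν.re
  have hρ : 0 < ρ := lt_min (half_pos hμ) hν
  have hμρ : μ ∈ {z : ℂ | ρ < z.re} := (min_le_left _ _).trans_lt (half_lt_self hμ)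
  rw [boostThetaSq, ← tsum_mul_left]
  refine hasDerivAt_tsum_of_isPreconnected (g := fun q z ↦ boostTerm N h c z ν q)
    (g' := fun q z ↦ -π * ((boostM c (coneA N h q) (coneB N h q) : ℂ) ^ 2 * boostTerm N h c z ν q))
    (((summable_exp_neg_mul_latticeSq hN h (ε := π * (ρ / 2) / C ^ 2) (by positivity)).mul_left
      (2 / (π * ρ))).mul_left π)
    (isOpen_lt continuous_const Complex.continuous_re)
    (convex_halfSpace_re_gt ρ).isPreconnected (fun q z _ ↦ ?_) (fun q z hz ↦ ?_) hμρ
    (summable_boostTerm hN h hc hμ hν) hμρ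
  · refine (((((hasDerivAt_id z).mul_const _).add_const _).const_mul
      (-(π : ℂ))).cexp.const_mul _).congr_deriv ?_
    rw [boostTerm, id]
    ring
  · rw [norm_mul, norm_neg, norm_real, Real.norm_of_nonneg Real.pi_pos.le]
    gcongr
    exact norm_sq_mul_boostTerm_le N h hC hcC hρ (le_of_lt hz) (min_le_right _ _) q

lemma weilSum_const_mul (N : ℕ) (h : ℝ) (a : ℂ) (F : ℝ → ℂ) :
    weilSum N h (fun x ↦ a * F x) = a * weilSum N h F := by
  simp_rw [weilSum, mul_left_comm _ a, Finset.mul_sum]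

lemma weilSum_add (N : ℕ) (h : ℝ) (F G : ℝ → ℂ) :
    weilSum N h (fun x ↦ F x + G x) = weilSum N h F + weilSum N h G := by
  simp_rw [weilSum, mul_add, Finset.sum_add_distrib]

lemma weilSum_sub (N : ℕ) (h : ℝ) (F G : ℝ → ℂ) :
    weilSum N h (fun x ↦ F x - G x) = weilSum N h F - weilSum N h G := by
  simp_rw [weilSum, mul_sub, Finset.sum_sub_distrib]

lemma hasDerivAt_weilSum {𝕜 : Type*} [NontriviallyNormedField 𝕜] [NormedAlgebra 𝕜 ℂ] {N : ℕ}
    (h : ℝ) {F : 𝕜 → ℝ → ℂ} {F' : ℝ → ℂ} {z : 𝕜} (hF : ∀ x, HasDerivAt (F · x) (F' x) z) :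
    HasDerivAt (fun w ↦ weilSum N h (F w)) (weilSum N h F') z :=
  HasDerivAt.fun_sum fun j _ ↦ (hF (j / N)).const_mul _

lemma hasDerivAt_mul_cpow_neg_half {μ ν : ℂ} (hμ : 0 < μ.re) (hν : 0 < ν.re) :
    HasDerivAt (fun z ↦ ((z * ν) ^ (1/2 : ℂ))⁻¹) (-((μ * ν) ^ (1/2 : ℂ))⁻¹ / (2 * μ)) μ := by
  have hμ0 := ne_zero_of_re_pos hμ
  have hslit : μ ∈ slitPlane := Or.inl hμ
  have hderiv := ((hasDerivAt_id μ).cpow_const (c := -(1/2)) hslit).mul_const (ν ^ (-(1/2) : ℂ))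
  have heq : ∀ z : ℂ, 0 < z.re → ((z * ν) ^ (1/2 : ℂ))⁻¹ = z ^ (-(1/2) : ℂ) * ν ^ (-(1/2) : ℂ) :=
    fun z hz ↦ by rw [← cpow_neg, mul_cpow_of_re_pos hz hν]
  refine (hderiv.congr_of_eventuallyEq ?_).congr_deriv ?_
  · filter_upwards [(isOpen_lt continuous_const Complex.continuous_re).mem_nhds hμ] with z hz
    exact heq z hz
  · rw [heq μ hμ, id, cpow_sub _ _ hμ0, cpow_one]
    field_simp

lemma boostThetaSq_eq_dual {N : ℕ} (hN : 0 < N) {h : ℝ} (hh : ∃ k : ℤ, h = (k : ℝ) / N) {c : ℝ}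
    (hc : 0 < c) {μ ν : ℂ} (hμ : 0 < μ.re) (hν : 0 < ν.re) :
    boostThetaSq N h c μ ν = -I / (N * (μ * ν) ^ (1/2 : ℂ)) *
      weilSum N h fun h' ↦ 1 / μ / (2 * π) * boostTheta N h' c (1 / μ) (1 / ν)
        - (1 / μ) ^ 2 * boostThetaSq N h' c (1 / μ) (1 / ν) := by
  have hμ0 := ne_zero_of_re_pos hμ
  have hpi : (π : ℂ) ≠ 0 := by exact_mod_cast Real.pi_ne_zero
  have hinv : HasDerivAt (fun z : ℂ ↦ 1 / z) (-(1 / μ ^ 2)) μ := by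
    simpa [one_div] using hasDerivAt_inv hμ0
  have hdual : ∀ x, HasDerivAt (fun z ↦ boostTheta N x c (1 / z) (1 / ν))
      (-π * boostThetaSq N x c (1 / μ) (1 / ν) * (-(1 / μ ^ 2))) μ := fun x ↦
    (hasDerivAt_boostTheta hN x hc (re_one_div_pos hμ) (re_one_div_pos hν)).comp μ hinv
  have hright := ((hasDerivAt_mul_cpow_neg_half hμ hν).const_mul (-I / N)).mul
    (hasDerivAt_weilSum (N := N) h hdual)
  have heq : (fun z ↦ boostTheta N h c z ν) =ᶠ[𝓝 μ] fun z ↦ -I / N * ((z * ν) ^ (1/2 : ℂ))⁻¹ *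
      weilSum N h fun x ↦ boostTheta N x c (1 / z) (1 / ν) := by
    filter_upwards [(isOpen_lt continuous_const Complex.continuous_re).mem_nhds hμ] with z hz
    rw [boostTheta_eq_dual hN hh hc hz hν, div_mul_eq_div_div, div_eq_mul_inv (-I / N)]
  have hderiv := (hasDerivAt_boostTheta hN h hc hμ hν).unique (hright.congr_of_eventuallyEq heq)
  have hcomm : (fun x ↦ -π * boostThetaSq N x c (1 / μ) (1 / ν) * (-(1 / μ ^ 2)))
      = fun x ↦ π / μ ^ 2 * boostThetaSq N x c (1 / μ) (1 / ν) := by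
    funext x
    ring
  rw [hcomm, weilSum_const_mul] at hderiv
  rw [weilSum_sub, weilSum_const_mul, weilSum_const_mul, ← mul_right_inj' (neg_ne_zero.mpr hpi),
    hderiv]
  field_simp
  ring

/-! ### Differentiation in the boost parameter -/

lemma hasDerivAt_boostX {c : ℝ} (hc : c ≠ 0) (a b : ℝ) :
    HasDerivAt (boostX · a b) (boostM c a b / c) c := by
  have hderiv := (((hasDerivAt_id c).mul_const a).sub ((hasDerivAt_inv hc).const_mul b)).div_const 2
  refine hderiv.congr_deriv ?_
  rw [boostM]
  field_simp
  ring

lemma hasDerivAt_smoothAbs {v : ℝ} (hv : 0 < v) {c : ℝ} (hc : c ≠ 0) (a b : ℝ) :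
    HasDerivAt (smoothAbs v · a b) (1 / c ^ 2 * (Real.exp (-2 * π * v * boostX c a b ^ 2) *
      (2 * √(2 * v) * boostM c a b ^ 2 - 1 / (π * √(2 * v))))) c := by
  have hX := hasDerivAt_boostX hc a b
  have herfc := (((hasDerivAt_erfc (√(2 * π * v) * boostX c a b)).comp c
    (hX.const_mul √(2 * π * v))).const_sub 1).const_mul a
  have hgauss := ((hX.fun_pow 2).const_mul (-2 * π * v)).exp.div_const (π * √(2 * v))
  have hinv : HasDerivAt (fun x : ℝ ↦ 1 / x) (-(c ^ 2)⁻¹) c := by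
    simpa [one_div] using hasDerivAt_inv hc
  refine (herfc.add (hinv.mul hgauss)).congr_deriv ?_
  have hexp : -(√(2 * π * v) * boostX c a b) ^ 2 = -2 * π * v * boostX c a b ^ 2 := by
    rw [sqrt_mul_sq hv]
    ring
  have hsqrt : √(2 * π * v) = √π * √(2 * v) := by
    rw [← Real.sqrt_mul Real.pi_pos.le]
    ring_nf
  have hs : √(2 * v) ^ 2 = 2 * v := Real.sq_sqrt (by positivity)
  have ha : c * a = boostM c a b + boostX c a b := by
    rw [boostM, boostX]
    ring
  have hs0 : √(2 * v) ≠ 0 := by positivity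
  rw [hexp, hsqrt]
  set E := Real.exp (-2 * π * v * boostX c a b ^ 2)
  set s := √(2 * v)
  set M := boostM c a b
  set X := boostX c a b
  linear_combination (norm := skip) 2 * E * s * M / c ^ 2 * ha + 2 * E * X * M / (c ^ 2 * s) * hs
  field_simp
  ring

lemma indefTerm_mul_exp (N : ℕ) (h : ℝ) {c : ℝ} (hc : c ≠ 0) (τ : ℂ) (q : ℤ × ℤ) :
    indefTerm N h τ q *
        (Real.exp (-2 * π * τ.im * boostX c (coneA N h q) (coneB N h q) ^ 2) : ℝ)
      = boostTerm N h c (-I * τ) (I * (starRingEnd ℂ) τ) q := by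
  have hc0 : (c : ℂ) ≠ 0 := by exact_mod_cast hc
  have hconj : (starRingEnd ℂ) τ = τ - 2 * I * (τ.im : ℂ) := by
    rw [eq_sub_iff_add_eq', ← eq_sub_iff_add_eq, sub_conj]
    push_cast
    ring
  rw [indefTerm, thetaCoeff, boostTerm, boostM, boostX, coneA, coneB, e, e, e, ofReal_exp, hconj,
    ← Complex.exp_add, ← Complex.exp_add, ← Complex.exp_add]
  congr 1
  push_cast
  field_simp
  ring_nf
  simp only [I_sq]
  ring

/-- The summand of `boostFlow`. -/
noncomputable def boostFlowTerm (N : ℕ) (h c : ℝ) (τ : ℂ) (q : ℤ × ℤ) : ℂ :=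
  ((2 * √(2 * τ.im) * boostM c (coneA N h q) (coneB N h q) ^ 2 - 1 / (π * √(2 * τ.im)) : ℝ) : ℂ) *
    boostTerm N h c (-I * τ) (I * (starRingEnd ℂ) τ) q

/-- The Gaussian theta series which, up to the factor `1 / c²`, is the derivative of
`∑ q, defect N h τ c q` in the boost parameter `c`. -/
noncomputable def boostFlow (N : ℕ) (h c : ℝ) (τ : ℂ) : ℂ :=
  ∑' q, boostFlowTerm N h c τ q

lemma hasDerivAt_defect (N : ℕ) (h : ℝ) {τ : ℂ} (hτ : 0 < τ.im) {c : ℝ} (hc : c ≠ 0)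
    (q : ℤ × ℤ) :
    HasDerivAt (defect N h τ · q) (((1 / c ^ 2 : ℝ) : ℂ) * boostFlowTerm N h c τ q) c := by
  refine ((((hasDerivAt_smoothAbs hτ hc (coneA N h q) (coneB N h q)).sub_const
    |coneA N h q|).ofReal_comp.const_mul (indefTerm N h τ q))).congr_deriv ?_
  rw [boostFlowTerm, ← indefTerm_mul_exp N h hc, ofReal_mul, ofReal_mul]
  ring

lemma re_neg_I_mul (τ : ℂ) : (-I * τ).re = τ.im := by simp

lemma re_I_mul_conj (τ : ℂ) : (I * (starRingEnd ℂ) τ).re = τ.im := by simp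

lemma norm_boostFlowTerm_le (N : ℕ) (h : ℝ) {τ : ℂ} (hτ : 0 < τ.im) {C c : ℝ} (hC : 0 < C)
    (hc : c ∈ Set.Icc (1 / C) C) (q : ℤ × ℤ) :
    ‖boostFlowTerm N h c τ q‖
      ≤ (2 * √(2 * τ.im) * (2 / (π * τ.im)) + 1 / (π * √(2 * τ.im))) *
        Real.exp (-(π * (τ.im / 2) / C ^ 2) * latticeSq N h q) := by
  have hterm := norm_boostTerm_le N h hC hc (half_pos hτ)
    ((half_le_self hτ.le).trans_eq (re_neg_I_mul τ).symm)
    ((half_le_self hτ.le).trans_eq (re_I_mul_conj τ).symm) q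
  have hsq := norm_sq_mul_boostTerm_le N h hC hc hτ (re_neg_I_mul τ).ge (re_I_mul_conj τ).ge q
  rw [norm_mul, ← ofReal_pow, norm_real, Real.norm_of_nonneg (sq_nonneg _)] at hsq
  rw [boostFlowTerm, norm_mul, norm_real]
  calc _ ≤ (2 * √(2 * τ.im) * boostM c (coneA N h q) (coneB N h q) ^ 2 + 1 / (π * √(2 * τ.im))) *
        ‖boostTerm N h c (-I * τ) (I * (starRingEnd ℂ) τ) q‖ := by
        gcongr
        exact (norm_sub_le _ _).trans_eq (by
          rw [Real.norm_of_nonneg (by positivity), Real.norm_of_nonneg (by positivity)])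
    _ ≤ _ := by
        rw [add_mul, add_mul, mul_assoc, mul_assoc _ (2 / (π * τ.im))]
        gcongr

lemma boostFlow_eq {N : ℕ} (hN : 0 < N) (h : ℝ) {c : ℝ} (hc : 0 < c) {τ : ℂ} (hτ : 0 < τ.im) :
    boostFlow N h c τ
      = 2 * (√(2 * τ.im) : ℂ) * boostThetaSq N h c (-I * τ) (I * (starRingEnd ℂ) τ)
        - 1 / (π * (√(2 * τ.im) : ℂ)) * boostTheta N h c (-I * τ) (I * (starRingEnd ℂ) τ) := by
  have hμ := (re_neg_I_mul τ).ge
  have hν := (re_I_mul_conj τ).ge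
  have hC : 0 < max c (1 / c) := lt_max_of_lt_left hc
  have hsq : Summable fun q ↦ (boostM c (coneA N h q) (coneB N h q) : ℂ) ^ 2 *
      boostTerm N h c (-I * τ) (I * (starRingEnd ℂ) τ) q :=
    .of_norm_bounded ((summable_exp_neg_mul_latticeSq hN h (by positivity)).mul_left _)
      (norm_sq_mul_boostTerm_le N h hC (mem_Icc_max_one_div hc) hτ hμ hν)
  have hterm := summable_boostTerm hN h hc (hτ.trans_le hμ) (hτ.trans_le hν)
  rw [boostFlow, boostThetaSq, boostTheta, ← tsum_mul_left, ← tsum_mul_left,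
    ← (hsq.mul_left _).tsum_sub (hterm.mul_left _)]
  refine tsum_congr fun q ↦ ?_
  rw [boostFlowTerm]
  push_cast
  ring

lemma hasDerivAt_totalDefect {N : ℕ} (hN : 0 < N) (h : ℝ) {τ : ℂ} (hτ : 0 < τ.im) {c : ℝ}
    (hc : 0 < c) :
    HasDerivAt (totalDefect N h τ) (((-(1 / c ^ 2) : ℝ) : ℂ) * boostFlow N h c τ) c := by
  obtain ⟨C, hC, hcC⟩ : ∃ C > 1, c ∈ Set.Ioo (1 / C) C := by
    refine ⟨c + 1 / c + 1, by linarith [one_div_pos.mpr hc], ?_, by linarith [one_div_pos.mpr hc]⟩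
    rw [one_div_lt (by positivity) hc]
    linarith
  have hC0 : 0 < C := one_pos.trans hC
  rw [boostFlow, ← tsum_mul_left]
  refine hasDerivAt_tsum_of_isPreconnected (y₀ := 1)
    (g := fun q y ↦ defect N h τ 1 q - defect N h τ y q)
    (g' := fun q y ↦ ((-(1 / y ^ 2) : ℝ) : ℂ) * boostFlowTerm N h y τ q)
    (((summable_exp_neg_mul_latticeSq hN h (ε := π * (τ.im / 2) / C ^ 2) (by positivity)).mul_left
      (2 * √(2 * τ.im) * (2 / (π * τ.im)) + 1 / (π * √(2 * τ.im)))).mul_left (C ^ 2))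
    isOpen_Ioo isPreconnected_Ioo (fun q y hy ↦ ?_) (fun q y hy ↦ ?_)
    ⟨(div_lt_one hC0).mpr hC, hC⟩ (by simp only [sub_self, summable_zero]) hcC
  · have hy0 : 0 < y := (one_div_pos.mpr hC0).trans hy.1
    refine ((hasDerivAt_defect N h hτ hy0.ne' q).const_sub _).congr_deriv ?_
    rw [ofReal_neg, neg_mul]
  · have hy0 : 0 < y := (one_div_pos.mpr hC0).trans hy.1
    rw [norm_mul, norm_real, norm_neg, Real.norm_of_nonneg (by positivity), ← one_div_pow]
    gcongr
    · exact (one_div_le hC0 hy0).mp hy.1.le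
    · exact norm_boostFlowTerm_le N h hτ hC0 ⟨hy.1.le, hy.2.le⟩ q

lemma one_div_neg_I_mul_neg_one_div (τ : ℂ) : 1 / (-I * (-1 / τ)) = -I * τ := by
  rw [neg_mul_comm, ← neg_div, neg_neg, mul_one_div, one_div_div, div_I, mul_comm, neg_mul]

lemma one_div_I_mul_conj_neg_one_div (τ : ℂ) :
    1 / (I * (starRingEnd ℂ) (-1 / τ)) = I * (starRingEnd ℂ) τ := by
  rw [map_div₀, map_neg, map_one, mul_div_assoc', one_div_div, mul_neg_one, div_neg, div_I,
    neg_neg, mul_comm]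

lemma neg_I_mul_mul_I_mul_conj_cpow_half (z : ℂ) :
    (-I * z * (I * (starRingEnd ℂ) z)) ^ (1/2 : ℂ) = ‖z‖ := by
  have hsq : -I * z * (I * (starRingEnd ℂ) z) = ((‖z‖ ^ 2 : ℝ) : ℂ) := by
    push_cast
    rw [← mul_conj']
    linear_combination (-z * (starRingEnd ℂ) z) * I_sq
  have hhalf : (1/2 : ℂ) = ((1/2 : ℝ) : ℂ) := by push_cast; rfl
  rw [hsq, hhalf, ← ofReal_cpow (sq_nonneg _), ← Real.sqrt_eq_rpow, Real.sqrt_sq (norm_nonneg z)]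

lemma boostFlow_neg_one_div {N : ℕ} (hN : 0 < N) {h : ℝ} (hh : ∃ k : ℤ, h = (k : ℝ) / N) {c : ℝ}
    (hc : 0 < c) {τ : ℂ} (hτ : 0 < τ.im) :
    boostFlow N h c (-1 / τ)
      = -(I * τ ^ 2 / N) * weilSum N h fun h' ↦ boostFlow N h' c τ := by
  have hτ0 := ne_zero_of_im_pos hτ
  have hτ' := im_neg_one_div_pos hτ
  have hsqrt : √(2 * (-1 / τ).im) = √(2 * τ.im) / ‖τ‖ := by
    rw [im_neg_one_div, normSq_eq_norm_sq, mul_div_assoc', Real.sqrt_div (by positivity),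
      Real.sqrt_sq (norm_nonneg _)]
  have hs : (√(2 * τ.im) : ℂ) ^ 2 = -I * (τ - (starRingEnd ℂ) τ) := by
    rw [← ofReal_pow, Real.sq_sqrt (by positivity), sub_conj]
    push_cast
    linear_combination (2 * τ.im : ℂ) * I_sq
  have hs0 : (√(2 * τ.im) : ℂ) ≠ 0 := by
    rw [ofReal_ne_zero]
    positivity
  have hn0 : (‖τ‖ : ℂ) ≠ 0 := by rwa [ofReal_ne_zero, norm_ne_zero_iff]
  have hn : (‖τ‖ : ℂ) ^ 2 = (starRingEnd ℂ) τ * τ := (conj_mul' τ).symm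
  have hpi : (π : ℂ) ≠ 0 := ofReal_ne_zero.mpr Real.pi_ne_zero
  simp_rw [fun h' ↦ boostFlow_eq hN h' hc hτ]
  rw [boostFlow_eq hN h hc hτ', boostThetaSq_eq_dual hN hh hc (by rwa [re_neg_I_mul])
    (by rwa [re_I_mul_conj]), boostTheta_eq_dual hN hh hc (by rwa [re_neg_I_mul])
    (by rwa [re_I_mul_conj]), one_div_neg_I_mul_neg_one_div, one_div_I_mul_conj_neg_one_div,
    neg_I_mul_mul_I_mul_conj_cpow_half, weilSum_sub, weilSum_sub, weilSum_const_mul,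
    weilSum_const_mul, weilSum_const_mul, weilSum_const_mul, hsqrt, norm_div, norm_neg,
    norm_one, ofReal_div, ofReal_div, ofReal_one]
  generalize weilSum N h (boostTheta N · c (-I * τ) (I * (starRingEnd ℂ) τ)) = B
  generalize weilSum N h (boostThetaSq N · c (-I * τ) (I * (starRingEnd ℂ) τ)) = A
  set s := (√(2 * τ.im) : ℂ)
  linear_combination (norm := skip)
    -I * B / (N * π * s) * (-I * τ * hs - hn + (τ - (starRingEnd ℂ) τ) * τ * I_sq)
      + 2 * s * I * τ ^ 2 / N * A * I_sq
  field_simp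
  ring

/-! ### The transformation under `τ ↦ -1/τ` -/

lemma totalDefect_neg_one_div {N : ℕ} (hN : 0 < N) {h : ℝ} (hh : ∃ k : ℤ, h = (k : ℝ) / N) {τ : ℂ}
    (hτ : 0 < τ.im) {c : ℝ} (hc : 0 < c) :
    totalDefect N h (-1 / τ) c
      = -(I * τ ^ 2 / N) * weilSum N h fun h' ↦ totalDefect N h' τ c := by
  have hleft : ∀ y > 0, HasDerivAt (totalDefect N h (-1 / τ))
      (((-(1 / y ^ 2) : ℝ) : ℂ) * boostFlow N h y (-1 / τ)) y := fun y hy ↦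
    hasDerivAt_totalDefect hN h (im_neg_one_div_pos hτ) hy
  have hright : ∀ y > 0, HasDerivAt
      (fun x ↦ -(I * τ ^ 2 / N) * weilSum N h fun h' ↦ totalDefect N h' τ x)
      (((-(1 / y ^ 2) : ℝ) : ℂ) * boostFlow N h y (-1 / τ)) y := fun y hy ↦ by
    refine ((hasDerivAt_weilSum h fun h' ↦
      hasDerivAt_totalDefect hN h' hτ hy).const_mul _).congr_deriv ?_
    rw [weilSum_const_mul, boostFlow_neg_one_div hN hh hy hτ, mul_left_comm]
  refine isOpen_Ioi.eqOn_of_deriv_eq isPreconnected_Ioi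
    (fun y hy ↦ (hleft y hy).differentiableAt.differentiableWithinAt)
    (fun y hy ↦ (hright y hy).differentiableAt.differentiableWithinAt)
    (fun y hy ↦ (hleft y hy).deriv.trans (hright y hy).deriv.symm) (Set.mem_Ioi.mpr one_pos) ?_ hc
  simp only [totalDefect_one, weilSum, mul_zero, Finset.sum_const_zero]

lemma tendsto_weilSum {α : Type*} {l : Filter α} {N : ℕ} (h : ℝ) {F : α → ℝ → ℂ} {G : ℝ → ℂ}
    (hF : ∀ j : ℕ, Tendsto (F · (j / N)) l (𝓝 (G (j / N)))) :
    Tendsto (fun c ↦ weilSum N h (F c)) l (𝓝 (weilSum N h G)) :=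
  tendsto_finsetSum _ fun j _ ↦ (hF j).const_mul _

lemma boostLimit_neg_one_div {N : ℕ} (hN : 0 < N) (hNe : Even N) {h : ℝ}
    (hh : ∃ k : ℤ, h = (k : ℝ) / N) {τ : ℂ} (hτ : 0 < τ.im) :
    boostLimit N h (-1 / τ) = -(I * τ ^ 2 / N) * weilSum N h fun h' ↦ boostLimit N h' τ := by
  have hright : Tendsto (fun c ↦ -(I * τ ^ 2 / N) * weilSum N h fun h' ↦ totalDefect N h' τ c)
      atTop (𝓝 (-(I * τ ^ 2 / N) * weilSum N h fun h' ↦ boostLimit N h' τ)) :=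
    (tendsto_weilSum h fun j ↦
      tendsto_totalDefect hN hNe ⟨j, by rw [Int.cast_natCast]⟩ hτ).const_mul _
  refine tendsto_nhds_unique (tendsto_totalDefect hN hNe hh (im_neg_one_div_pos hτ))
    (hright.congr' ?_)
  filter_upwards [eventually_gt_atTop 0] with c hc
  exact (totalDefect_neg_one_div hN hh hτ hc).symm

lemma e_eq_one_iff (z : ℂ) : e z = 1 ↔ ∃ n : ℤ, z = n := by
  simp_rw [e, Complex.exp_eq_one_iff, mul_comm (_ : ℂ) (2 * π * I),
    mul_right_inj' Complex.two_pi_I_ne_zero]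

lemma e_natCast_mul (n : ℕ) (z : ℂ) : e (n * z) = e z ^ n := by
  rw [e, e, ← Complex.exp_nat_mul]
  ring_nf

lemma sum_range_e_pow {N : ℕ} {z : ℂ} (hz : ∃ k : ℤ, N * z = k) :
    ∑ m ∈ Finset.range N, e z ^ m = if ∃ k : ℤ, z = k then (N : ℂ) else 0 := by
  split_ifs with h
  · simp [(e_eq_one_iff z).mpr h]
  · have hpow : e z ^ N = 1 := by rwa [← e_natCast_mul, e_eq_one_iff]
    rw [geom_sum_eq (h ∘ (e_eq_one_iff z).mp), hpow, sub_self, zero_div]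

lemma halfIntPart_add_half (m : ℤ) :
    halfIntPart ((m : ℝ) + 1/2) = e (((m : ℂ) + 1/2) / 2) := by
  rw [halfIntPart, if_pos ⟨m, rfl⟩]
  push_cast
  rfl

lemma weilSum_halfIntPart_eq_sum {K : ℕ} (hK : 0 < K) (h : ℝ) :
    weilSum (K + K) h halfIntPart
      = ∑ m ∈ Finset.range (K + K), e (((h : ℂ) + 1/2) * (m + 1/2)) := by
  have hK0 : (K : ℝ) ≠ 0 := by positivity
  have hval : ∀ m : ℕ, (((K + K) * m + K : ℕ) : ℝ) / (K + K : ℕ) = ((m : ℤ) : ℝ) + 1/2 := fun m ↦ by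
    push_cast
    field_simp
    ring
  refine (Finset.sum_of_injOn (fun m ↦ (K + K) * m + K) (fun a _ b _ hab ↦ ?_) (fun m hm ↦ ?_)
    (fun j hj hj' ↦ ?_) (fun m _ ↦ ?_)).symm
  · exact Nat.eq_of_mul_eq_mul_left (Nat.add_pos_left hK K) (Nat.add_right_cancel hab)
  · rw [Finset.coe_range, Set.mem_Iio] at hm ⊢
    nlinarith
  · rw [halfIntPart, if_neg, mul_zero]
    rintro ⟨m, hm⟩
    have hjm : (j : ℤ) = (K + K) * m + K := by
      rw [div_eq_iff (by positivity)] at hm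
      have hreal : (j : ℝ) = (K + K) * m + K := by
        rw [hm]
        push_cast
        ring
      exact_mod_cast hreal
    rw [Finset.mem_range] at hj
    have hm0 : 0 ≤ m := by
      by_contra! hneg
      nlinarith
    lift m to ℕ using hm0
    refine hj' ⟨m, ?_, by exact_mod_cast hjm.symm⟩
    rw [Finset.coe_range, Set.mem_Iio]
    by_contra! hge
    zify at hj hge
    nlinarith
  · rw [mul_div_assoc, hval, halfIntPart_add_half, ← e_add]
    push_cast
    ring_nf

lemma weilSum_halfIntPart {N : ℕ} (hN : 0 < N) (hNe : Even N) {h : ℝ}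
    (hh : ∃ k : ℤ, h = (k : ℝ) / N) : weilSum N h halfIntPart = I * N * halfIntPart h := by
  obtain ⟨K, rfl⟩ := hNe
  obtain ⟨k, hk⟩ := hh
  have hint : ∃ l : ℤ, ((K + K : ℕ) : ℂ) * ((h : ℂ) + 1/2) = l := by
    refine ⟨k + K, ?_⟩
    have hmul : ((K + K : ℕ) : ℂ) * h = k := by
      rw [hk, ofReal_div, ofReal_natCast, mul_div_cancel₀ _ (by exact_mod_cast hN.ne'),
        ofReal_intCast]
    rw [mul_add, hmul]
    push_cast
    ring
  have hterm : ∀ m : ℕ, e (((h : ℂ) + 1/2) * (m + 1/2)) = I * e (h / 2) * e ((h : ℂ) + 1/2) ^ m :=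
    fun m ↦ by
      rw [← e_natCast_mul, ← e_one_quarter, ← e_add, ← e_add]
      ring_nf
  have hcond : (∃ l : ℤ, (h : ℂ) + 1/2 = l) ↔ ∃ m : ℤ, h = (m : ℝ) + 1/2 := by
    refine ⟨fun ⟨l, hl⟩ ↦ ⟨l - 1, ?_⟩, fun ⟨m, hm⟩ ↦ ⟨m + 1, ?_⟩⟩
    · have hreal : h + 1/2 = l := by simpa using congrArg Complex.re hl
      push_cast
      linarith
    · rw [hm]
      push_cast
      ring
  rw [weilSum_halfIntPart_eq_sum (by lia), Finset.sum_congr rfl fun m _ ↦ hterm m,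
    ← Finset.mul_sum, sum_range_e_pow hint, halfIntPart]
  simp only [hcond]
  split_ifs
  · ring
  · simp only [mul_zero]

lemma eta3_mul_tvtheta {N : ℕ} (hN : 0 < N) (h : ℝ) {τ : ℂ} (hτ : 0 < τ.im) :
    2 * I * eta3 τ * tvtheta N h τ
      = boostLimit N h τ + E2star τ / (6 * N) * halfIntPart h := by
  have hη := eta3_ne_zero hτ
  have hN0 : (N : ℂ) ≠ 0 := by exact_mod_cast hN.ne'
  have hv : (τ.im : ℂ) ≠ 0 := by exact_mod_cast hτ.ne'
  have hpi : (π : ℂ) ≠ 0 := by exact_mod_cast Real.pi_ne_zero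
  rw [tvtheta, boostLimit, E2star, halfIntPart]
  split_ifs <;> field_simp <;> ring

lemma eta3_mul_tvtheta_neg_one_div {N : ℕ} (hN : 0 < N) (hNe : Even N) {h : ℝ}
    (hh : ∃ k : ℤ, h = (k : ℝ) / N) {τ : ℂ} (hτ : 0 < τ.im) :
    eta3 (-1 / τ) * tvtheta N h (-1 / τ)
      = -(I * τ ^ 2 / N) * (eta3 τ * weilSum N h (tvtheta N · τ)) := by
  have hN0 : (N : ℂ) ≠ 0 := by exact_mod_cast hN.ne'
  have hsum : 2 * I * eta3 τ * weilSum N h (tvtheta N · τ)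
      = weilSum N h (boostLimit N · τ) + E2star τ / (6 * N) * (I * N * halfIntPart h) := by
    rw [← weilSum_const_mul, ← weilSum_halfIntPart hN hNe hh, ← weilSum_const_mul, ← weilSum_add]
    simp_rw [eta3_mul_tvtheta hN _ hτ]
  have hleft := eta3_mul_tvtheta hN h (im_neg_one_div_pos hτ)
  rw [boostLimit_neg_one_div hN hNe hh hτ, E2star_neg_one_div hτ] at hleft
  refine mul_left_cancel₀ (mul_ne_zero two_ne_zero I_ne_zero) ?_
  linear_combination (norm := skip) hleft + I * τ ^ 2 / N * hsum +
    τ ^ 2 * E2star τ / (6 * N) * halfIntPart h * I_sq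
  field_simp
  ring

lemma cpow_neg_half_eq {τ : ℂ} (hτ : 0 < τ.im) :
    τ ^ (-(1/2) : ℂ) = (-I * τ) ^ (1/2 : ℂ) * e (1/8) / τ := by
  have hτ0 := ne_zero_of_im_pos hτ
  have harg : 0 ≤ τ.arg := Complex.arg_nonneg_iff.mpr hτ.le
  have hlog : Complex.log (-I * τ) = Complex.log (-I) + Complex.log τ := by
    refine Complex.log_mul (neg_ne_zero.mpr I_ne_zero) hτ0 ?_
    rw [Complex.arg_neg_I]
    constructor <;> linarith [Complex.arg_le_pi τ, Real.pi_pos]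
  have hrot : (-I * τ) ^ (1/2 : ℂ) * e (1/8) = τ ^ (1/2 : ℂ) := by
    rw [cpow_def_of_ne_zero hτ0, cpow_def_of_ne_zero (mul_ne_zero (neg_ne_zero.mpr I_ne_zero) hτ0),
      hlog, Complex.log_neg_I, e, ← Complex.exp_add]
    ring_nf
  have hsub : (-(1/2) : ℂ) = 1/2 - 1 := by norm_num
  rw [hrot, hsub, cpow_sub _ _ hτ0, cpow_one]

/-- the transformation of `ϑ̃_{N,h}` under `τ ↦ -1/τ`. -/
theorem tvtheta_inversion (N : ℕ) (hN : 0 < N) (hNe : Even N) (h : ℝ)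
    (hh : ∃ k : ℤ, h = (k : ℝ) / N) (τ : ℂ) (hτ : 0 < τ.im) :
    τ ^ (-(1/2) : ℂ) * tvtheta N h (-1/τ) =
      e ((1:ℂ)/8) / N *
        ∑ j ∈ Finset.range (N^2), e (((h * j / N : ℝ) : ℂ)) * tvtheta N ((j : ℝ) / N) τ := by
  have hτ0 := ne_zero_of_im_pos hτ
  have hweight : (-I * τ) ^ (1/2 : ℂ) * tvtheta N h (-1 / τ)
      = τ / N * weilSum N h (tvtheta N · τ) := by
    have hη : -I * τ * eta3 τ ≠ 0 :=
      mul_ne_zero (mul_ne_zero (neg_ne_zero.mpr I_ne_zero) hτ0) (eta3_ne_zero hτ)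
    have hprod := eta3_mul_tvtheta_neg_one_div hN hNe hh hτ
    rw [eta3_neg_one_div hτ] at hprod
    refine mul_left_cancel₀ hη ?_
    linear_combination hprod
  calc τ ^ (-(1/2) : ℂ) * tvtheta N h (-1 / τ)
      = e (1/8) / τ * ((-I * τ) ^ (1/2 : ℂ) * tvtheta N h (-1 / τ)) := by
        rw [cpow_neg_half_eq hτ]
        ring
    _ = e (1/8) / N * weilSum N h (tvtheta N · τ) := by
        rw [hweight]
        field_simp
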